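/- Strong q-stability theorem (inequalities): for every n ≥ 1 and α ∈ [0,α_max], one has Θ_q^{(n)}(α) ≥ Θ_{q'}(α) for every q ∈ [1,∞); and for every q ∈ (−∞,1) \ {0}, Θ_q^{(n)}(α) ≤ Θ_{q'}(α) if α > 0 and Θ_q^{(n)}(0) ≤ 0; here q' := q/(q−1) (with q' := ∞ for q = 1 and the convention t/∞ := 0). -/

import Mathlib

open MeasureTheory ProbabilityTheory Set Filter
open scoped ENNReal NNReal BigOperators Classical Topology

noncomputable section

namespace BL

variable {X : Type*} {Y : Type*} [MeasurableSpace X] [MeasurableSpace Y]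

/-! ### Extended logarithm, exponential, and division conventions -/

/-- Extended logarithm `ℝ≥0∞ → EReal`, with `log 0 = ⊥` and `log ⊤ = ⊤`. -/
def elog (x : ℝ≥0∞) : EReal :=
  if x = 0 then ⊥ else if x = ⊤ then ⊤ else ((Real.log x.toReal : ℝ) : EReal)

/-- Extended exponential `EReal → ℝ≥0∞`, with `exp ⊥ = 0` and `exp ⊤ = ⊤`. -/
def eexp (x : EReal) : ℝ≥0∞ :=
  if x = ⊥ then 0 else if x = ⊤ then ⊤ else ENNReal.ofReal (Real.exp x.toReal)

/-- Division of an extended real by a real, with the conventions `a/0 = +∞` for `a > 0`,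
`a/0 = -∞` for `a < 0` and `0/0 = 0`. -/
def ediv (x : EReal) (c : ℝ) : EReal :=
  if c = 0 then (if 0 < x then ⊤ else if x < 0 then ⊥ else 0)
  else x * ((c⁻¹ : ℝ) : EReal)

/-- Division of a real by an extended real, with the convention `t/(±∞) = 0`. -/
def divE (t : ℝ) (r : EReal) : EReal :=
  if r = ⊤ ∨ r = ⊥ then 0 else ((t / r.toReal : ℝ) : EReal)

/-- Hölder conjugate, as an extended real (`conj 1 = ⊤`). -/
def conj (q : ℝ) : EReal := if q = 1 then ⊤ else ((q / (q - 1) : ℝ) : EReal)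

/-! ### Norms with a real (possibly negative) exponent -/

/-- `p`-"norm" of an `ℝ≥0∞`-valued function (`p` a nonzero real). -/
def enorm (P : Measure X) (F : X → ℝ≥0∞) (p : ℝ) : ℝ≥0∞ :=
  (∫⁻ x, F x ^ p ∂P) ^ (1 / p)

/-- `∞`-norm (essential supremum) of an `ℝ≥0∞`-valued function. -/
def enormInf (P : Measure X) (F : X → ℝ≥0∞) : ℝ≥0∞ := essSup F P

/-- `p`-"norm" of a nonnegative real-valued function. -/
def rnorm (P : Measure X) (f : X → ℝ) (p : ℝ) : ℝ≥0∞ :=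
  enorm P (fun x => ENNReal.ofReal (f x)) p

/-- `∞`-norm of a nonnegative real-valued function. -/
def rnormInf (P : Measure X) (f : X → ℝ) : ℝ≥0∞ :=
  enormInf P (fun x => ENNReal.ofReal (f x))

/-! ### Divergences -/

/-- Kullback--Leibler divergence, valued in `EReal` (equal to `⊤` when undefined). -/
def KL (Q P : Measure X) : EReal :=
  if Q ≪ P ∧ Integrable (fun x => Real.log (Q.rnDeriv P x).toReal) Q then
    ((∫ x, Real.log (Q.rnDeriv P x).toReal ∂Q : ℝ) : EReal)
  else ⊤

/-- Rényi divergence of order `s` (`s = 1` gives the KL divergence). -/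
def Renyi (s : ℝ) (Q P : Measure X) : EReal :=
  if s = 1 then KL Q P
  else (((s - 1)⁻¹ : ℝ) : EReal) *
    elog (∫⁻ x, Q.rnDeriv (Q + P) x ^ s * P.rnDeriv (Q + P) x ^ (1 - s) ∂(Q + P))

/-- First marginal of a measure on a product space. -/
def m1 (P : Measure (X × Y)) : Measure X := P.map Prod.fst

/-- Second marginal of a measure on a product space. -/
def m2 (P : Measure (X × Y)) : Measure Y := P.map Prod.snd

/-- Couplings of a pair of (probability) measures. -/
def couplings (μ : Measure X) (ν : Measure Y) : Set (Measure (X × Y)) :=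
  {π | IsProbabilityMeasure π ∧ π.map Prod.fst = μ ∧ π.map Prod.snd = ν}

/-- `𝔻(QX, QY ‖ P)` : minimum relative entropy over couplings. -/
def Dmin (QX : Measure X) (QY : Measure Y) (P : Measure (X × Y)) : EReal :=
  ⨅ (π : Measure (X × Y)) (_ : π ∈ couplings QX QY), KL π P

/-! ### The functions φ and their envelopes -/

/-- `φ̲(s,t)`. -/
def phiL (P : Measure (X × Y)) (s t : ℝ) : EReal :=
  ⨅ (QX : Measure X) (QY : Measure Y) (_ : IsProbabilityMeasure QX)
    (_ : IsProbabilityMeasure QY) (_ : QX ≪ m1 P) (_ : QY ≪ m2 P)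
    (_ : KL QX (m1 P) = (s : EReal)) (_ : KL QY (m2 P) = (t : EReal)),
    Dmin QX QY P

/-- `φ̄(s,t)`. -/
def phiU (P : Measure (X × Y)) (s t : ℝ) : EReal :=
  ⨆ (QX : Measure X) (QY : Measure Y) (_ : IsProbabilityMeasure QX)
    (_ : IsProbabilityMeasure QY) (_ : QX ≪ m1 P) (_ : QY ≪ m2 P)
    (_ : KL QX (m1 P) = (s : EReal)) (_ : KL QY (m2 P) = (t : EReal)),
    Dmin QX QY P

/-- Lower convex envelope on `[0,∞)²`, via convex combinations of (at most) 4 points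
(Carathéodory). -/
def lce2 (F : ℝ → ℝ → EReal) (a b : ℝ) : EReal :=
  ⨅ (q : Fin 4 → ℝ) (x : Fin 4 → ℝ × ℝ) (_ : ∀ i, 0 ≤ q i) (_ : ∑ i, q i = 1)
    (_ : ∀ i, 0 ≤ (x i).1 ∧ 0 ≤ (x i).2)
    (_ : ∑ i, q i * (x i).1 = a) (_ : ∑ i, q i * (x i).2 = b),
    ∑ i, (q i : EReal) * F (x i).1 (x i).2

/-- Upper concave envelope on `[0,∞)²`. -/
def uce2 (F : ℝ → ℝ → EReal) (a b : ℝ) : EReal :=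
  ⨆ (q : Fin 4 → ℝ) (x : Fin 4 → ℝ × ℝ) (_ : ∀ i, 0 ≤ q i) (_ : ∑ i, q i = 1)
    (_ : ∀ i, 0 ≤ (x i).1 ∧ 0 ≤ (x i).2)
    (_ : ∑ i, q i * (x i).1 = a) (_ : ∑ i, q i * (x i).2 = b),
    ∑ i, (q i : EReal) * F (x i).1 (x i).2

/-- Lower convex envelope on `[0,∞)`. -/
def lce1 (F : ℝ → EReal) (a : ℝ) : EReal :=
  ⨅ (q : Fin 3 → ℝ) (x : Fin 3 → ℝ) (_ : ∀ i, 0 ≤ q i) (_ : ∑ i, q i = 1)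
    (_ : ∀ i, 0 ≤ x i) (_ : ∑ i, q i * x i = a),
    ∑ i, (q i : EReal) * F (x i)

/-- Upper concave envelope on `[0,∞)`. -/
def uce1 (F : ℝ → EReal) (a : ℝ) : EReal :=
  ⨆ (q : Fin 3 → ℝ) (x : Fin 3 → ℝ) (_ : ∀ i, 0 ≤ q i) (_ : ∑ i, q i = 1)
    (_ : ∀ i, 0 ≤ x i) (_ : ∑ i, q i * x i = a),
    ∑ i, (q i : EReal) * F (x i)

/-- `Θ̲(α,β)`: increasing lower convex envelope of `φ̲`. -/
def ThetaL (P : Measure (X × Y)) (α β : ℝ) : EReal :=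
  ⨅ (s : ℝ) (t : ℝ) (_ : α ≤ s) (_ : β ≤ t), lce2 (phiL P) s t

/-- `Θ̄(α,β)`: increasing upper concave envelope of `φ̄`. -/
def ThetaU (P : Measure (X × Y)) (α β : ℝ) : EReal :=
  ⨆ (s : ℝ) (t : ℝ) (_ : 0 ≤ s) (_ : s ≤ α) (_ : 0 ≤ t) (_ : t ≤ β), uce2 (phiU P) s t

/-- `φ_r(s) = inf_{t ≥ 0} (φ̲(s,t) - t/r)` for `r ∈ [1,∞]` (`r` an extended real). -/
def phiRinf (P : Measure (X × Y)) (r : EReal) (s : ℝ) : EReal :=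
  ⨅ (t : ℝ) (_ : 0 ≤ t), phiL P s t - divE t r

/-- `Θ_r(α)` for `r ∈ [1,∞]`. -/
def ThetaGe1 (P : Measure (X × Y)) (r : EReal) (α : ℝ) : EReal :=
  ⨅ (s : ℝ) (_ : α ≤ s), lce1 (phiRinf P r) s

/-- `φ_r(s) = sup_{t ≥ 0} (φ̄(s,t) - t/r)` for `r ∈ (0,1)`. -/
def phiSupR (P : Measure (X × Y)) (r : ℝ) (s : ℝ) : EReal :=
  ⨆ (t : ℝ) (_ : 0 ≤ t), phiU P s t - divE t (r : EReal)

/-- `φ_r(s)` for `r < 0`. -/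
def phiNeg (P : Measure (X × Y)) (r : ℝ) (s : ℝ) : EReal :=
  ⨆ (QX : Measure X) (_ : IsProbabilityMeasure QX) (_ : QX ≪ m1 P)
    (_ : KL QX (m1 P) = (s : EReal)),
    ⨅ (QY : Measure Y) (_ : IsProbabilityMeasure QY) (_ : QY ≪ m2 P),
      Dmin QX QY P - ediv (KL QY (m2 P)) r

/-- `φ_r(s)` for `r < 1`, `r ≠ 0`. -/
def phiLT1 (P : Measure (X × Y)) (r : ℝ) (s : ℝ) : EReal :=
  if 0 < r then phiSupR P r s else phiNeg P r s

/-- `Θ_r(α)` for `r < 1`, `r ≠ 0`. -/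
def ThetaLT1 (P : Measure (X × Y)) (r : ℝ) (α : ℝ) : EReal :=
  ⨆ (s : ℝ) (_ : 0 ≤ s) (_ : s ≤ α), uce1 (phiLT1 P r) s

/-- `α_max = sup {-log μ(A) : μ(A) > 0}`. -/
def alphaMax (μ : Measure X) : EReal :=
  ⨆ (A : Set X) (_ : MeasurableSet A) (_ : μ A ≠ 0), -elog (μ A)

/-! ### Entropies -/

/-- `Ent_{p,p}(f)`. -/
def entPP (P : Measure X) (f : X → ℝ) (p : ℝ) : EReal :=
  (((∫ x, f x ^ p * Real.log (f x ^ p) ∂P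
      - (∫ x, f x ^ p ∂P) * Real.log (∫ x, f x ^ p ∂P))
     / (∫ x, f x ^ p ∂P) : ℝ) : EReal)

/-- `Ent_{p,p̂}(f)` for a nonzero real `p` and a real `p̂`. -/
def ent (P : Measure X) (f : X → ℝ) (p phat : ℝ) : EReal :=
  if phat = p then entPP P f p
  else if phat = 0 then -elog (P {x | 0 < f x})
  else ((p * phat / (p - phat) : ℝ) : EReal) * (elog (rnorm P f p) - elog (rnorm P f phat))

/-- `Ent_{p,∞}(f)` for a nonzero real `p`. -/
def entTop (P : Measure X) (f : X → ℝ) (p : ℝ) : EReal :=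
  if rnormInf P f = ⊤ then (if 0 < p then ⊤ else ⊥)
  else ((-p : ℝ) : EReal) * (elog (rnorm P f p) - elog (rnormInf P f))

/-- `Ent_{p,p*}(f)` for a nonzero real `p` and `p* ∈ [0,∞]`. -/
def entE (P : Measure X) (f : X → ℝ) (p : ℝ) (ps : ℝ≥0∞) : EReal :=
  if ps = ⊤ then entTop P f p else ent P f p ps.toReal

/-- Admissible functions: measurable, nonnegative, not a.e. zero. -/
def Adm (P : Measure X) (f : X → ℝ) : Prop :=
  Measurable f ∧ (∀ x, 0 ≤ f x) ∧ ¬ f =ᵐ[P] (fun _ => 0)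

/-! ### Products -/

/-- `n`-fold product measure. -/
def piM (n : ℕ) (P : Measure X) : Measure (Fin n → X) := Measure.pi fun _ => P

def fstv {n : ℕ} (z : Fin n → X × Y) : Fin n → X := fun i => (z i).1
def sndv {n : ℕ} (z : Fin n → X × Y) : Fin n → Y := fun i => (z i).2

/-- `⟨f,g⟩ = ∫ f(xⁿ) g(yⁿ) dP^{⊗n}`. -/
def innerFG (P : Measure (X × Y)) (n : ℕ) (f : (Fin n → X) → ℝ) (g : (Fin n → Y) → ℝ) :
    ℝ≥0∞ :=
  ∫⁻ z, ENNReal.ofReal (f (fstv z)) * ENNReal.ofReal (g (sndv z)) ∂(piM n P)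

/-- The set `A × B` viewed inside `(X × Y)ⁿ`. -/
def prodSet {n : ℕ} (A : Set (Fin n → X)) (B : Set (Fin n → Y)) : Set (Fin n → X × Y) :=
  {z | fstv z ∈ A ∧ sndv z ∈ B}

/-! ### Kernels -/

/-- Product of kernel measures `⊗ᵢ κ(yᵢ)`. -/
def kpi {n : ℕ} (κ : Kernel Y X) (y : Fin n → Y) : Measure (Fin n → X) :=
  Measure.pi fun i => κ (y i)

/-- The conditional expectation operator `P_{X|Y}^{⊗n}(f)`. -/
def condOp {n : ℕ} (κ : Kernel Y X) (f : (Fin n → X) → ℝ) : (Fin n → Y) → ℝ≥0∞ :=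
  fun y => ∫⁻ x, ENNReal.ofReal (f x) ∂(kpi κ y)

/-- `κ` is a regular conditional probability of the first coordinate given the second. -/
def IsCondKernel (P : Measure (X × Y)) (κ : Kernel Y X) : Prop :=
  ∀ (A : Set X) (B : Set Y), MeasurableSet A → MeasurableSet B →
    P (A ×ˢ B) = ∫⁻ y in B, κ y A ∂(m2 P)

/-! ### η and `Λ̲*` -/

/-- The function `η_{p,p̂}(α,s)`. -/
def eta (p phat α : ℝ) (s : EReal) : EReal :=
  if 0 ≤ p ∧ 0 ≤ phat then max (ediv ((α : EReal) - s) p) (ediv ((α : EReal) - s) phat)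
  else if 0 < p ∧ phat < 0 then ediv ((α : EReal) - s) p
  else if 0 < phat ∧ p < 0 then ediv ((α : EReal) - s) phat
  else ⊥

/-- `Λ̲*_{p,q,p̂,q̂}(α,β)` (time sharing variable of size ≤ 4). -/
def LamLstar (P : Measure (X × Y)) (p q phat qhat α β : ℝ) : EReal :=
  ⨅ (w : Fin 4 → ℝ) (QX : Fin 4 → Measure X) (QY : Fin 4 → Measure Y)
    (_ : ∀ i, 0 ≤ w i) (_ : ∑ i, w i = 1)
    (_ : ∀ i, IsProbabilityMeasure (QX i)) (_ : ∀ i, QX i ≪ m1 P)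
    (_ : ∀ i, IsProbabilityMeasure (QY i)) (_ : ∀ i, QY i ≪ m2 P),
    (∑ i, (w i : EReal) * Dmin (QX i) (QY i) P)
      + eta p phat α (∑ i, (w i : EReal) * KL (QX i) (m1 P))
      + eta q qhat β (∑ i, (w i : EReal) * KL (QY i) (m2 P))

/-! ### Sub/supergradients (slopes in `[0,∞]`) -/

def IsSubgrad2 (F : ℝ → ℝ → EReal) (α β : ℝ) (u v : ℝ≥0∞) : Prop :=
  ∀ s t : ℝ, 0 ≤ s → 0 ≤ t →
    F α β + (u : EReal) * ((s - α : ℝ) : EReal) + (v : EReal) * ((t - β : ℝ) : EReal) ≤ F s t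

def IsSupergrad2 (F : ℝ → ℝ → EReal) (α β : ℝ) (u v : ℝ≥0∞) : Prop :=
  ∀ s t : ℝ, 0 ≤ s → 0 ≤ t →
    F s t ≤ F α β + (u : EReal) * ((s - α : ℝ) : EReal) + (v : EReal) * ((t - β : ℝ) : EReal)

def IsSubgrad1 (F : ℝ → EReal) (α : ℝ) (u : ℝ≥0∞) : Prop :=
  ∀ s : ℝ, 0 ≤ s → F α + (u : EReal) * ((s - α : ℝ) : EReal) ≤ F s

def IsSupergrad1 (F : ℝ → EReal) (α : ℝ) (u : ℝ≥0∞) : Prop :=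
  ∀ s : ℝ, 0 ≤ s → F s ≤ F α + (u : EReal) * ((s - α : ℝ) : EReal)

/-! ### The n-dimensional q-stability exponents -/

/-- `Θ_q^{(n)}(α)` for `q ≥ 1`. -/
def qStabSup (P : Measure (X × Y)) (κ : Kernel Y X) (n : ℕ) (q α : ℝ) : EReal :=
  -((((n : ℝ)⁻¹ : ℝ) : EReal) *
    elog (⨆ (A : Set (Fin n → X)) (_ : MeasurableSet A)
        (_ : piM n (m1 P) A ≤ ENNReal.ofReal (Real.exp (-((n : ℝ) * α)))),
        enorm (piM n (m2 P)) (fun y => kpi κ y A) q))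

/-- `Θ_q^{(n)}(α)` for `q < 1`, `q ≠ 0`. -/
def qStabInf (P : Measure (X × Y)) (κ : Kernel Y X) (n : ℕ) (q α : ℝ) : EReal :=
  -((((n : ℝ)⁻¹ : ℝ) : EReal) *
    elog (⨅ (A : Set (Fin n → X)) (_ : MeasurableSet A)
        (_ : ENNReal.ofReal (Real.exp (-((n : ℝ) * α))) ≤ piM n (m1 P) A),
        enorm (piM n (m2 P)) (fun y => kpi κ y A) q))

/-! ### Envelope lemmas -/

lemma coe_le_of_forall {x : ℝ} {F : EReal} (h : ∀ a : ℝ, F ≤ a → x ≤ a) : (x : EReal) ≤ F := by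
  induction F with
  | bot => have := h (x - 1) bot_le; linarith
  | top => exact le_top
  | coe r => exact_mod_cast h r le_rfl

lemma le_coe_of_forall {x : ℝ} {F : EReal} (h : ∀ a : ℝ, (a : EReal) ≤ F → a ≤ x) :
    F ≤ (x : EReal) := by
  induction F with
  | bot => exact bot_le
  | top => have := h (x + 1) le_top; linarith
  | coe r => exact_mod_cast h r le_rfl

lemma coe_mul_mono {w : ℝ} (hw : 0 ≤ w) {x y : EReal} (h : x ≤ y) :
    (w : EReal) * x ≤ (w : EReal) * y :=
  mul_le_mul_of_nonneg_left h (by exact_mod_cast hw)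

lemma lce1_chord (F : ℝ → EReal) {w x y a a' : ℝ} (hw : 0 ≤ w) (hw1 : w ≤ 1)
    (hx : 0 ≤ x) (hy : 0 ≤ y) (ha : F x ≤ a) (ha' : F y ≤ a') :
    lce1 F (w * x + (1 - w) * y) ≤ ((w * a + (1 - w) * a' : ℝ) : EReal) := by
  unfold lce1
  refine (iInf_le _ ![w, 1 - w, 0]).trans ?_
  refine (iInf_le _ ![x, y, y]).trans ?_
  refine (iInf_le _ ?_).trans ?_
  · intro i; fin_cases i <;> simp <;> linarith
  refine (iInf_le _ ?_).trans ?_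
  · simp [Fin.sum_univ_three]
  refine (iInf_le _ ?_).trans ?_
  · intro i; fin_cases i <;> simp <;> linarith
  refine (iInf_le _ ?_).trans ?_
  · simp [Fin.sum_univ_three]
  simp only [Fin.sum_univ_three]
  simp only [Matrix.cons_val_zero, Matrix.cons_val_one, Matrix.cons_val]
  rw [EReal.coe_zero, zero_mul, add_zero]
  rw [EReal.coe_add, EReal.coe_mul, EReal.coe_mul]
  exact add_le_add (coe_mul_mono hw ha) (coe_mul_mono (by linarith) ha')

lemma uce1_chord (F : ℝ → EReal) {w x y a a' : ℝ} (hw : 0 ≤ w) (hw1 : w ≤ 1)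
    (hx : 0 ≤ x) (hy : 0 ≤ y) (ha : (a : EReal) ≤ F x) (ha' : (a' : EReal) ≤ F y) :
    ((w * a + (1 - w) * a' : ℝ) : EReal) ≤ uce1 F (w * x + (1 - w) * y) := by
  unfold uce1
  refine le_trans ?_ (le_iSup _ ![w, 1 - w, 0])
  refine le_trans ?_ (le_iSup _ ![x, y, y])
  refine le_trans ?_ (le_iSup _ ?_)
  swap
  · intro i; fin_cases i <;> simp <;> linarith
  refine le_trans ?_ (le_iSup _ ?_)
  swap
  · simp [Fin.sum_univ_three]
  refine le_trans ?_ (le_iSup _ ?_)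
  swap
  · intro i; fin_cases i <;> simp <;> linarith
  refine le_trans ?_ (le_iSup _ ?_)
  swap
  · simp [Fin.sum_univ_three]
  simp only [Fin.sum_univ_three]
  simp only [Matrix.cons_val_zero, Matrix.cons_val_one, Matrix.cons_val]
  rw [EReal.coe_zero, zero_mul, add_zero]
  rw [EReal.coe_add, EReal.coe_mul, EReal.coe_mul]
  exact add_le_add (coe_mul_mono hw ha) (coe_mul_mono (by linarith) ha')

lemma lce1_le (F : ℝ → EReal) {x a : ℝ} (hx : 0 ≤ x) (ha : F x ≤ a) : lce1 F x ≤ a := by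
  have := lce1_chord F (w := 1) (by norm_num) le_rfl hx hx ha ha
  simpa using this

lemma le_uce1 (F : ℝ → EReal) {x a : ℝ} (hx : 0 ≤ x) (ha : (a : EReal) ≤ F x) :
    (a : EReal) ≤ uce1 F x := by
  have := uce1_chord F (w := 1) (by norm_num) le_rfl hx hx ha ha
  simpa using this

lemma lce_support (F : ℝ → EReal) {α s1 K : ℝ} (hα : 0 ≤ α) (hs1 : α < s1) (hF : F s1 ≠ ⊤)
    (hK : (K : EReal) ≤ ⨅ (s : ℝ) (_ : α ≤ s), lce1 F s) :
    ∃ l c : ℝ, 0 ≤ l ∧ l * α + c = K ∧ ∀ s : ℝ, 0 ≤ s → ((l * s + c : ℝ) : EReal) ≤ F s := by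
  have hK' : ∀ s, α ≤ s → (K : EReal) ≤ lce1 F s := fun s hs =>
    hK.trans ((iInf_le _ s).trans (iInf_le _ hs))
  have hge : ∀ s a, α ≤ s → F s ≤ (a : ℝ) → K ≤ a := fun s a hs ha => by
    exact_mod_cast (hK' s hs).trans (lce1_le F (hα.trans hs) ha)
  have hch : ∀ s s' a a' : ℝ, 0 ≤ s → s < α → α < s' → F s ≤ a → F s' ≤ a' →
      (K - a) / (α - s) ≤ (a' - K) / (s' - α) := by
    intro s s' a a' hs hsα hs' ha ha'
    have h1 : 0 < s' - s := by linarith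
    have := lce1_chord F (w := (s' - α) / (s' - s)) (div_nonneg (by linarith) h1.le)
      ((div_le_one h1).2 (by linarith)) hs (by linarith : 0 ≤ s') ha ha'
    have e : (s' - α) / (s' - s) * s + (1 - (s' - α) / (s' - s)) * s' = α := by
      field_simp; ring
    rw [e] at this
    have h2 := (hK' α le_rfl).trans this
    have h3 : K ≤ (s' - α) / (s' - s) * a + (1 - (s' - α) / (s' - s)) * a' := by exact_mod_cast h2
    have h4 : (s' - α) / (s' - s) * a + (1 - (s' - α) / (s' - s)) * a'
      = ((s' - α) * a + (α - s) * a') / (s' - s) := by field_simp; ring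
    rw [h4, le_div_iff₀ h1] at h3
    rw [div_le_div_iff₀ (by linarith) (by linarith)]
    nlinarith
  set S : Set ℝ := insert 0 {x | ∃ s a : ℝ, 0 ≤ s ∧ s < α ∧ F s ≤ a ∧ x = (K - a) / (α - s)} with hS
  have hub : ∀ s' a' : ℝ, α < s' → F s' ≤ a' → ∀ x ∈ S, x ≤ (a' - K) / (s' - α) := by
    intro s' a' hs' ha' x hx
    rcases hx with rfl | ⟨s, a, h0, h1, h2, rfl⟩
    · exact div_nonneg (by linarith [hge s' a' hs'.le ha']) (by linarith)
    · exact hch s s' a a' h0 h1 hs' h2 ha'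
  have hne : S.Nonempty := ⟨0, Or.inl rfl⟩
  obtain ⟨a1, ha1⟩ : ∃ a1 : ℝ, F s1 ≤ a1 := by
    induction h : F s1 with
    | bot => exact ⟨0, bot_le⟩
    | top => exact absurd h hF
    | coe r => exact ⟨r, le_rfl⟩
  have hbdd : BddAbove S := ⟨_, hub s1 a1 hs1 ha1⟩
  refine ⟨sSup S, K - sSup S * α, le_csSup hbdd (Or.inl rfl), by ring, ?_⟩
  intro s hs
  refine coe_le_of_forall fun a ha => ?_
  rcases lt_trichotomy s α with h | h | h
  · have := le_csSup hbdd (Or.inr ⟨s, a, hs, h, ha, rfl⟩ : (K - a) / (α - s) ∈ S)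
    rw [div_le_iff₀ (by linarith)] at this
    nlinarith
  · subst h
    linarith [hge s a le_rfl ha]
  · have := csSup_le hne (hub s a h ha)
    rw [le_div_iff₀ (by linarith)] at this
    nlinarith

lemma uce_support (F : ℝ → EReal) {α K : ℝ} (hα : 0 < α) (hF : F 0 ≠ ⊥)
    (hK : (⨆ (s : ℝ) (_ : 0 ≤ s) (_ : s ≤ α), uce1 F s) ≤ (K : EReal)) :
    ∃ l c : ℝ, 0 ≤ l ∧ l * α + c = K ∧ ∀ s : ℝ, 0 ≤ s → F s ≤ ((l * s + c : ℝ) : EReal) := by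
  have hK' : ∀ s, 0 ≤ s → s ≤ α → uce1 F s ≤ (K : EReal) := fun s h0 hs =>
    le_trans ((le_iSup₂_of_le (f := fun (_ : 0 ≤ s) (_ : s ≤ α) => uce1 F s) h0 hs le_rfl)) <|
      (le_iSup (fun s : ℝ => ⨆ (_ : 0 ≤ s) (_ : s ≤ α), uce1 F s) s).trans hK
  have hge : ∀ (s a : ℝ), 0 ≤ s → s ≤ α → (a : EReal) ≤ F s → a ≤ K := fun s a h0 hs ha => by
    exact_mod_cast (le_uce1 F h0 ha).trans (hK' s h0 hs)
  have hch : ∀ s s' a a' : ℝ, 0 ≤ s → s < α → α < s' → (a : EReal) ≤ F s → (a' : EReal) ≤ F s' →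
      (a' - K) / (s' - α) ≤ (K - a) / (α - s) := by
    intro s s' a a' hs hsα hs' ha ha'
    have h1 : 0 < s' - s := by linarith
    have := uce1_chord F (w := (s' - α) / (s' - s)) (div_nonneg (by linarith) h1.le)
      ((div_le_one h1).2 (by linarith)) hs (by linarith : 0 ≤ s') ha ha'
    have e : (s' - α) / (s' - s) * s + (1 - (s' - α) / (s' - s)) * s' = α := by
      field_simp; ring
    rw [e] at this
    have h2 := this.trans (hK' α hα.le le_rfl)
    have h3 : (s' - α) / (s' - s) * a + (1 - (s' - α) / (s' - s)) * a' ≤ K := by exact_mod_cast h2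
    have h4 : (s' - α) / (s' - s) * a + (1 - (s' - α) / (s' - s)) * a'
      = ((s' - α) * a + (α - s) * a') / (s' - s) := by field_simp; ring
    rw [h4, div_le_iff₀ h1] at h3
    rw [div_le_div_iff₀ (by linarith) (by linarith)]
    nlinarith
  set S : Set ℝ := insert 0 {x | ∃ s a : ℝ, α < s ∧ (a : EReal) ≤ F s ∧ x = (a - K) / (s - α)}
    with hS
  have hub : ∀ s a : ℝ, 0 ≤ s → s < α → (a : EReal) ≤ F s → ∀ x ∈ S, x ≤ (K - a) / (α - s) := by
    intro s a h0 hs ha x hx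
    rcases hx with rfl | ⟨s', a', h1, h2, rfl⟩
    · exact div_nonneg (by linarith [hge s a h0 hs.le ha]) (by linarith)
    · exact hch s s' a a' h0 hs h1 ha h2
  have hne : S.Nonempty := ⟨0, Or.inl rfl⟩
  obtain ⟨a1, ha1⟩ : ∃ a1 : ℝ, (a1 : EReal) ≤ F 0 := by
    induction h : F 0 with
    | bot => exact absurd h hF
    | top => exact ⟨0, le_top⟩
    | coe r => exact ⟨r, le_rfl⟩
  have hbdd : BddAbove S := ⟨_, hub 0 a1 le_rfl hα ha1⟩
  refine ⟨sSup S, K - sSup S * α, le_csSup hbdd (Or.inl rfl), by ring, ?_⟩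
  intro s hs
  refine le_coe_of_forall fun a ha => ?_
  rcases lt_trichotomy s α with h | h | h
  · have := csSup_le hne (hub s a hs h ha)
    rw [le_div_iff₀ (by linarith)] at this
    nlinarith
  · subst h
    linarith [hge s a hs le_rfl ha]
  · have := le_csSup hbdd (Or.inr ⟨s, a, h, ha, rfl⟩ : (a - K) / (s - α) ∈ S)
    rw [div_le_iff₀ (by linarith)] at this
    nlinarith


/-! ### KL divergence lemmas -/

section KLsec

variable {Ω : Type*} [MeasurableSpace Ω]

lemma KL_of {Q P : Measure Ω} (h : Q ≪ P)
    (hi : Integrable (fun x => Real.log (Q.rnDeriv P x).toReal) Q) :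
    KL Q P = ((∫ x, Real.log (Q.rnDeriv P x).toReal ∂Q : ℝ) : EReal) := by
  unfold KL; rw [if_pos ⟨h, hi⟩]

lemma of_KL_ne_top {Q P : Measure Ω} (h : KL Q P ≠ ⊤) :
    Q ≪ P ∧ Integrable (fun x => Real.log (Q.rnDeriv P x).toReal) Q ∧
    KL Q P = ((∫ x, Real.log (Q.rnDeriv P x).toReal ∂Q : ℝ) : EReal) := by
  unfold KL at h ⊢
  split_ifs at h ⊢ with h1
  · exact ⟨h1.1, h1.2, rfl⟩
  · exact absurd rfl h

lemma donsker_varadhan (Q P : Measure Ω) [IsProbabilityMeasure Q] [IsProbabilityMeasure P]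
    (hQP : Q ≪ P) (hi : Integrable (fun x => Real.log (Q.rnDeriv P x).toReal) Q)
    (u : Ω → ℝ) (hum : Measurable u) (hu0 : ∀ x, 0 ≤ u x) (hupos : ∀ᵐ x ∂Q, 0 < u x)
    (huP : Integrable u P) (hul : Integrable (fun x => Real.log (u x)) Q) :
    ∫ x, Real.log (u x) ∂Q ≤ (∫ x, Real.log (Q.rnDeriv P x).toReal ∂Q) + Real.log (∫ x, u x ∂P) := by
  set ρ := Q.rnDeriv P with hρ
  have hρm : Measurable ρ := Measure.measurable_rnDeriv Q P
  set a := ∫ x, u x ∂P with ha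
  have ha0 : 0 ≤ a := integral_nonneg hu0
  have hapos : 0 < a := by
    rcases ha0.eq_or_lt with h | h
    · exfalso
      have h0 : u =ᵐ[P] 0 := (integral_eq_zero_iff_of_nonneg hu0 huP).1 (ha ▸ h.symm)
      have h1 : ∀ᵐ x ∂Q, u x = 0 := hQP.ae_le h0
      have h2 : ∀ᵐ x ∂Q, False := by
        filter_upwards [h1, hupos] with x hx hx'
        exact hx'.ne' hx
      have : Q = 0 := by simpa using h2
      exact IsProbabilityMeasure.ne_zero Q this
    · exact h
  have hpos : ∀ᵐ x ∂Q, 0 < ρ x := Measure.rnDeriv_pos hQP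
  have hfin : ∀ᵐ x ∂Q, ρ x < ⊤ := hQP.ae_le (Measure.rnDeriv_lt_top Q P)
  have hlin : ∫⁻ x, ENNReal.ofReal (u x / (ρ x).toReal) ∂Q ≤ ENNReal.ofReal a := by
    rw [← lintegral_rnDeriv_mul hQP
      (by fun_prop : AEMeasurable (fun x => ENNReal.ofReal (u x / (ρ x).toReal)) P)]
    rw [ha, ofReal_integral_eq_lintegral_ofReal huP (Eventually.of_forall hu0)]
    refine lintegral_mono_ae ?_
    filter_upwards [Measure.rnDeriv_lt_top Q P] with x hx
    rcases eq_or_ne (ρ x) 0 with h | h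
    · rw [h]; simp
    · have hp : 0 < (ρ x).toReal := ENNReal.toReal_pos h hx.ne
      have e : ρ x = ENNReal.ofReal (ρ x).toReal := (ENNReal.ofReal_toReal hx.ne).symm
      calc ρ x * ENNReal.ofReal (u x / (ρ x).toReal)
          = ENNReal.ofReal (ρ x).toReal * ENNReal.ofReal (u x / (ρ x).toReal) := by rw [← e]
        _ = ENNReal.ofReal (u x) := by
          rw [← ENNReal.ofReal_mul hp.le, mul_div_cancel₀ _ hp.ne']
        _ ≤ _ := le_rfl
  have hnn : ∀ x, 0 ≤ u x / (ρ x).toReal := fun x => div_nonneg (hu0 x) ENNReal.toReal_nonneg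
  have hinteg : Integrable (fun x => u x / (ρ x).toReal) Q := by
    refine ⟨(hum.div hρm.ennreal_toReal).aestronglyMeasurable, ?_⟩
    rw [hasFiniteIntegral_iff_ofReal (Eventually.of_forall hnn)]
    exact hlin.trans_lt ENNReal.ofReal_lt_top
  have hle : ∫ x, u x / (ρ x).toReal ∂Q ≤ a := by
    rw [integral_eq_lintegral_of_nonneg_ae (Eventually.of_forall hnn) hinteg.1]
    exact ENNReal.toReal_le_of_le_ofReal ha0 hlin
  have key : ∫ x, (Real.log (u x) - Real.log (ρ x).toReal - Real.log a) ∂Q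
      ≤ ∫ x, (u x / (ρ x).toReal * a⁻¹ - 1) ∂Q := by
    refine integral_mono_ae ((hul.sub hi).sub (integrable_const _))
      ((hinteg.mul_const _).sub (integrable_const _)) ?_
    filter_upwards [hupos, hpos, hfin] with x h1 h2 h3
    have hp : 0 < (ρ x).toReal := ENNReal.toReal_pos h2.ne' h3.ne
    have := Real.log_le_sub_one_of_pos (x := u x / (ρ x).toReal * a⁻¹) (by positivity)
    rw [Real.log_mul (by positivity) (by positivity), Real.log_div h1.ne' hp.ne', Real.log_inv]
      at this
    linarith
  rw [integral_sub (f := fun x => Real.log (u x) - Real.log (ρ x).toReal) (hul.sub hi)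
    (integrable_const _), integral_sub hul hi,
    integral_sub (hinteg.mul_const _) (integrable_const _), integral_mul_const] at key
  simp only [integral_const, probReal_univ, one_smul] at key
  have : (∫ x, u x / (ρ x).toReal ∂Q) * a⁻¹ ≤ 1 := by
    rw [← div_eq_mul_inv, div_le_one hapos]; exact hle
  linarith

lemma KL_int_nonneg (Q P : Measure Ω) [IsProbabilityMeasure Q] [IsProbabilityMeasure P]
    (hQP : Q ≪ P) (hi : Integrable (fun x => Real.log (Q.rnDeriv P x).toReal) Q) :
    0 ≤ ∫ x, Real.log (Q.rnDeriv P x).toReal ∂Q := by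
  have := donsker_varadhan Q P hQP hi (fun _ => 1) measurable_const (by simp) (by simp)
    (integrable_const _) (by simp)
  simpa using this

lemma KL_nonneg (Q P : Measure Ω) [IsProbabilityMeasure Q] [IsProbabilityMeasure P] :
    0 ≤ KL Q P := by
  by_cases h : KL Q P = ⊤
  · rw [h]; exact le_top
  · obtain ⟨h1, h2, h3⟩ := of_KL_ne_top h
    rw [h3]; exact_mod_cast KL_int_nonneg Q P h1 h2

lemma ac_int_of_le (Q P : Measure Ω) [IsProbabilityMeasure Q] [IsProbabilityMeasure P]
    (C : ℝ) (hC : 0 ≤ C) (h : Q ≤ ENNReal.ofReal C • P) :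
    Q ≪ P ∧ Integrable (fun x => Real.log (Q.rnDeriv P x).toReal) Q := by
  have hac : Q ≪ P := (Measure.absolutelyContinuous_of_le h).trans
    (Measure.smul_absolutelyContinuous)
  refine ⟨hac, ?_⟩
  have hb : Q.rnDeriv P ≤ᵐ[P] fun _ => ENNReal.ofReal C := by
    refine ae_le_of_forall_setLIntegral_le_of_sigmaFinite (Measure.measurable_rnDeriv Q P) ?_
    intro s hs _
    rw [Measure.setLIntegral_rnDeriv hac, lintegral_const]
    simpa using h s
  rw [← integrable_rnDeriv_smul_iff hac]
  refine Integrable.of_bound (C := 1 + C ^ 2) ?_ ?_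
  · exact (by fun_prop : Measurable _).aestronglyMeasurable
  filter_upwards [hb] with x hx
  have h1 : (Q.rnDeriv P x).toReal ≤ C := ENNReal.toReal_le_of_le_ofReal hC hx
  have h0 : 0 ≤ (Q.rnDeriv P x).toReal := ENNReal.toReal_nonneg
  set r := (Q.rnDeriv P x).toReal
  rw [smul_eq_mul, Real.norm_eq_abs]
  rcases h0.eq_or_lt with h2 | h2
  · rw [← h2]; simp; positivity
  rcases le_total r 1 with h3 | h3
  · have := Real.abs_log_mul_self_lt r h2 h3
    rw [mul_comm]
    nlinarith [sq_nonneg C]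
  · rw [abs_of_nonneg (mul_nonneg h0 (Real.log_nonneg h3))]
    have := Real.log_le_sub_one_of_pos h2
    nlinarith

/-- Normalised tilting of `P` by a function `w`. -/
def tilt (P : Measure Ω) (w : Ω → ℝ) : Measure Ω :=
  P.withDensity (fun x => ENNReal.ofReal (w x / ∫ y, w y ∂P))

lemma tilt_facts (P : Measure Ω) [IsProbabilityMeasure P] (w : Ω → ℝ) (hm : Measurable w)
    (h0 : ∀ x, 0 ≤ w x) (h1 : ∀ x, w x ≤ 1) (hZ : 0 < ∫ y, w y ∂P) :
    IsProbabilityMeasure (tilt P w) ∧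
    tilt P w ≤ ENNReal.ofReal (∫ y, w y ∂P)⁻¹ • P ∧
    (∀ᵐ x ∂(tilt P w), 0 < w x) ∧
    Integrable (fun x => Real.log (w x)) (tilt P w) ∧
    KL (tilt P w) P = ((∫ x, Real.log (w x) ∂(tilt P w) - Real.log (∫ y, w y ∂P) : ℝ) : EReal) := by
  set Z := ∫ y, w y ∂P with hZd
  have hwi : Integrable w P := Integrable.of_bound hm.aestronglyMeasurable 1
    (Eventually.of_forall fun x => by rw [Real.norm_eq_abs, abs_of_nonneg (h0 x)]; exact h1 x)
  have hmd : Measurable (fun x => ENNReal.ofReal (w x / Z)) := by fun_prop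
  have hprob : IsProbabilityMeasure (tilt P w) := by
    constructor
    unfold tilt
    rw [withDensity_apply _ MeasurableSet.univ, Measure.restrict_univ,
      ← ofReal_integral_eq_lintegral_ofReal (hwi.div_const _)
        (Eventually.of_forall fun x => div_nonneg (h0 x) hZ.le), integral_div, ← hZd,
      div_self hZ.ne', ENNReal.ofReal_one]
  have hle : tilt P w ≤ ENNReal.ofReal Z⁻¹ • P := by
    unfold tilt
    rw [← withDensity_const]
    refine withDensity_mono (Eventually.of_forall fun x => ?_)
    refine ENNReal.ofReal_le_ofReal ?_
    rw [← hZd, ← one_div]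
    exact div_le_div_of_nonneg_right (h1 x) hZ.le
  obtain ⟨hac, hinteg⟩ := ac_int_of_le (tilt P w) P Z⁻¹ (by positivity) hle
  have hrn : ∀ᵐ x ∂(tilt P w), (tilt P w).rnDeriv P x = ENNReal.ofReal (w x / Z) :=
    hac.ae_le (Measure.rnDeriv_withDensity P hmd)
  have hpos : ∀ᵐ x ∂(tilt P w), 0 < w x := by
    filter_upwards [hrn, Measure.rnDeriv_pos hac] with x hx hx'
    rw [hx, ENNReal.ofReal_pos] at hx'
    by_contra hcon
    have : w x = 0 := le_antisymm (not_lt.1 hcon) (h0 x)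
    rw [this] at hx'; simp at hx'
  have heq : (fun x => Real.log ((tilt P w).rnDeriv P x).toReal) =ᵐ[tilt P w]
      fun x => Real.log (w x) - Real.log Z := by
    filter_upwards [hrn, hpos] with x hx hp
    rw [hx, ENNReal.toReal_ofReal (div_nonneg hp.le hZ.le), Real.log_div hp.ne' hZ.ne']
  have hli : Integrable (fun x => Real.log (w x)) (tilt P w) := by
    have := (hinteg.congr heq).add (integrable_const (Real.log Z))
    refine this.congr (Eventually.of_forall fun x => ?_)
    simp
  refine ⟨hprob, hle, hpos, hli, ?_⟩
  rw [KL_of hac hinteg, integral_congr_ae heq, integral_sub hli (integrable_const _)]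
  simp

end KLsec

instance instm1 (P : Measure (X × Y)) [IsProbabilityMeasure P] : IsProbabilityMeasure (m1 P) :=
  Measure.isProbabilityMeasure_map measurable_fst.aemeasurable

instance instm2 (P : Measure (X × Y)) [IsProbabilityMeasure P] : IsProbabilityMeasure (m2 P) :=
  Measure.isProbabilityMeasure_map measurable_snd.aemeasurable

lemma KL_self {Ω : Type*} [MeasurableSpace Ω] (P : Measure Ω) [IsProbabilityMeasure P] :
    KL P P = 0 := by
  have h : (fun x => Real.log (P.rnDeriv P x).toReal) =ᵐ[P] fun _ => 0 := by
    filter_upwards [Measure.rnDeriv_self P] with x hx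
    rw [hx]; simp
  rw [KL_of Measure.AbsolutelyContinuous.rfl ((integrable_const (0:ℝ)).congr h.symm),
    integral_congr_ae h]
  simp


/-! ### Products and tensorization -/

instance instpiM {Ω : Type*} [MeasurableSpace Ω] (n : ℕ) (P : Measure Ω) [IsProbabilityMeasure P] :
    IsProbabilityMeasure (piM n P) := by unfold piM; infer_instance

lemma measurable_fstv {n : ℕ} : Measurable (fstv : (Fin n → X × Y) → Fin n → X) := by
  unfold fstv; fun_prop

lemma measurable_sndv {n : ℕ} : Measurable (sndv : (Fin n → X × Y) → Fin n → Y) := by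
  unfold sndv; fun_prop

lemma measurable_cons {Ω : Type*} [MeasurableSpace Ω] (n : ℕ) :
    Measurable (fun p : Ω × (Fin n → Ω) => (Fin.cons p.1 p.2 : Fin (n + 1) → Ω)) := by
  refine measurable_pi_lambda _ fun i => ?_
  refine Fin.cases ?_ (fun j => ?_) i
  · simpa using measurable_fst
  · simp only [Fin.cons_succ]; fun_prop

lemma lintegral_piM_succ {Ω : Type*} [MeasurableSpace Ω] (P : Measure Ω) [IsProbabilityMeasure P]
    (n : ℕ) (g : (Fin (n + 1) → Ω) → ℝ≥0∞) (hg : Measurable g) :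
    ∫⁻ z, g z ∂(piM (n + 1) P) = ∫⁻ a, ∫⁻ z, g (Fin.cons a z) ∂(piM n P) ∂P := by
  have h := (measurePreserving_piFinSuccAbove (fun _ : Fin (n + 1) => P) 0).symm
  unfold piM
  rw [← h.lintegral_comp hg, lintegral_prod]
  · refine lintegral_congr fun a => lintegral_congr fun z => ?_
    congr 1
    ext i
    simp [MeasurableEquiv.piFinSuccAbove]
  · exact (hg.comp h.measurable).aemeasurable

set_option linter.unusedSectionVars false

section Tensor

variable (P : Measure (X × Y)) [IsProbabilityMeasure P] (l b : ℝ) (m C : ℝ≥0∞)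

lemma fstv_cons {n : ℕ} (a : X × Y) (z : Fin n → X × Y) :
    fstv (Fin.cons a z : Fin (n + 1) → X × Y) = Fin.cons a.1 (fstv z) := by
  funext i; refine Fin.cases ?_ (fun j => ?_) i <;> simp [fstv]

lemma sndv_cons {n : ℕ} (a : X × Y) (z : Fin n → X × Y) :
    sndv (Fin.cons a z : Fin (n + 1) → X × Y) = Fin.cons a.2 (sndv z) := by
  funext i; refine Fin.cases ?_ (fun j => ?_) i <;> simp [sndv]

lemma tensor_fwd
    (h : ∀ (u : X → ℝ≥0∞) (v : Y → ℝ≥0∞), Measurable u → Measurable v → (∀ x, u x ≤ 1) →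
      (∀ y, m ≤ v y) → (∀ y, v y ≤ 1) →
      ∫⁻ z, u z.1 ^ l * v z.2 ^ b ∂P ≤ C * (∫⁻ x, u x ∂(m1 P)) ^ l * (∫⁻ y, v y ∂(m2 P)) ^ b)
    (n : ℕ) : ∀ (u : (Fin n → X) → ℝ≥0∞) (v : (Fin n → Y) → ℝ≥0∞), Measurable u → Measurable v →
      (∀ x, u x ≤ 1) → (∀ y, m ≤ v y) → (∀ y, v y ≤ 1) →
      ∫⁻ z, u (fstv z) ^ l * v (sndv z) ^ b ∂(piM n P)
        ≤ C ^ n * (∫⁻ x, u x ∂(piM n (m1 P))) ^ l * (∫⁻ y, v y ∂(piM n (m2 P))) ^ b := by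
  induction n with
  | zero =>
    intro u v hu hv _ _ _
    unfold piM
    simp only [Measure.pi_of_empty _ (fun i : Fin 0 => i.elim0), pow_zero, one_mul]
    have hmeas : Measurable (fun z : Fin 0 → X × Y => u (fstv z) ^ l * v (sndv z) ^ b) :=
      ((hu.comp measurable_fstv).pow_const _).mul ((hv.comp measurable_sndv).pow_const _)
    rw [lintegral_dirac' _ hmeas, lintegral_dirac' _ hu, lintegral_dirac' _ hv]
    refine le_of_eq ?_
    congr 3
    · exact Subsingleton.elim _ _
    · exact Subsingleton.elim _ _
  | succ n ih =>
    intro u v hu hv hu1 hvm hv1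
    have hmeas : Measurable (fun z : Fin (n + 1) → X × Y => u (fstv z) ^ l * v (sndv z) ^ b) :=
      ((hu.comp measurable_fstv).pow_const _).mul ((hv.comp measurable_sndv).pow_const _)
    have hcu : Measurable (fun p : X × (Fin n → X) => u (Fin.cons p.1 p.2)) :=
      hu.comp (measurable_cons n)
    have hcv : Measurable (fun p : Y × (Fin n → Y) => v (Fin.cons p.1 p.2)) :=
      hv.comp (measurable_cons n)
    rw [lintegral_piM_succ P n _ hmeas, lintegral_piM_succ (m1 P) n _ hu,
      lintegral_piM_succ (m2 P) n _ hv]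
    set U : X → ℝ≥0∞ := fun a => ∫⁻ x, u (Fin.cons a x) ∂(piM n (m1 P)) with hU
    set V : Y → ℝ≥0∞ := fun a => ∫⁻ x, v (Fin.cons a x) ∂(piM n (m2 P)) with hV
    have hUm : Measurable U := hcu.lintegral_prod_right'
    have hVm : Measurable V := hcv.lintegral_prod_right'
    have step : ∀ a : X × Y, ∫⁻ z, u (fstv (Fin.cons a z : Fin (n + 1) → X × Y)) ^ l
        * v (sndv (Fin.cons a z : Fin (n + 1) → X × Y)) ^ b ∂(piM n P)
        ≤ C ^ n * (U a.1 ^ l * V a.2 ^ b) := by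
      intro a
      simp only [fstv_cons, sndv_cons]
      rw [← mul_assoc]
      exact ih (fun x => u (Fin.cons a.1 x)) (fun y => v (Fin.cons a.2 y))
        (hcu.comp measurable_prodMk_left) (hcv.comp measurable_prodMk_left)
        (fun x => hu1 _) (fun y => hvm _) (fun y => hv1 _)
    calc _ ≤ ∫⁻ a, C ^ n * (U a.1 ^ l * V a.2 ^ b) ∂P := lintegral_mono step
      _ = C ^ n * ∫⁻ a, U a.1 ^ l * V a.2 ^ b ∂P := by
        rw [lintegral_const_mul]
        exact ((hUm.comp measurable_fst).pow_const _).mul ((hVm.comp measurable_snd).pow_const _)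
      _ ≤ C ^ n * (C * (∫⁻ x, U x ∂(m1 P)) ^ l * (∫⁻ y, V y ∂(m2 P)) ^ b) := by
        gcongr
        refine h U V hUm hVm (fun x => ?_) (fun y => ?_) (fun y => ?_)
        · calc U x ≤ ∫⁻ _, 1 ∂(piM n (m1 P)) := lintegral_mono fun _ => hu1 _
            _ = 1 := by simp
        · calc m = ∫⁻ _, m ∂(piM n (m2 P)) := by simp
            _ ≤ V y := lintegral_mono fun _ => hvm _
        · calc V y ≤ ∫⁻ _, 1 ∂(piM n (m2 P)) := lintegral_mono fun _ => hv1 _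
            _ = 1 := by simp
      _ = _ := by ring

lemma tensor_rev
    (h : ∀ (u : X → ℝ≥0∞) (v : Y → ℝ≥0∞), Measurable u → Measurable v → (∀ x, u x ≤ 1) →
      (∀ y, m ≤ v y) → (∀ y, v y ≤ 1) →
      C * (∫⁻ x, u x ∂(m1 P)) ^ l * (∫⁻ y, v y ∂(m2 P)) ^ b ≤ ∫⁻ z, u z.1 ^ l * v z.2 ^ b ∂P)
    (n : ℕ) : ∀ (u : (Fin n → X) → ℝ≥0∞) (v : (Fin n → Y) → ℝ≥0∞), Measurable u → Measurable v →
      (∀ x, u x ≤ 1) → (∀ y, m ≤ v y) → (∀ y, v y ≤ 1) →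
      C ^ n * (∫⁻ x, u x ∂(piM n (m1 P))) ^ l * (∫⁻ y, v y ∂(piM n (m2 P))) ^ b
        ≤ ∫⁻ z, u (fstv z) ^ l * v (sndv z) ^ b ∂(piM n P) := by
  induction n with
  | zero =>
    intro u v hu hv _ _ _
    unfold piM
    simp only [Measure.pi_of_empty _ (fun i : Fin 0 => i.elim0), pow_zero, one_mul]
    rw [lintegral_dirac' _ (by fun_prop), lintegral_dirac' _ (by fun_prop), lintegral_dirac']
    · refine le_of_eq ?_
      congr 3
      · exact Subsingleton.elim _ _
      · exact Subsingleton.elim _ _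
    · exact ((hu.comp measurable_fstv).pow_const _).mul ((hv.comp measurable_sndv).pow_const _)
  | succ n ih =>
    intro u v hu hv hu1 hvm hv1
    have hmeas : Measurable (fun z : Fin (n + 1) → X × Y => u (fstv z) ^ l * v (sndv z) ^ b) :=
      ((hu.comp measurable_fstv).pow_const _).mul ((hv.comp measurable_sndv).pow_const _)
    have hcu : Measurable (fun p : X × (Fin n → X) => u (Fin.cons p.1 p.2)) :=
      hu.comp (measurable_cons n)
    have hcv : Measurable (fun p : Y × (Fin n → Y) => v (Fin.cons p.1 p.2)) :=
      hv.comp (measurable_cons n)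
    rw [lintegral_piM_succ P n _ hmeas, lintegral_piM_succ (m1 P) n _ hu,
      lintegral_piM_succ (m2 P) n _ hv]
    set U : X → ℝ≥0∞ := fun a => ∫⁻ x, u (Fin.cons a x) ∂(piM n (m1 P)) with hU
    set V : Y → ℝ≥0∞ := fun a => ∫⁻ x, v (Fin.cons a x) ∂(piM n (m2 P)) with hV
    have hUm : Measurable U := hcu.lintegral_prod_right'
    have hVm : Measurable V := hcv.lintegral_prod_right'
    have step : ∀ a : X × Y, C ^ n * (U a.1 ^ l * V a.2 ^ b) ≤
        ∫⁻ z, u (fstv (Fin.cons a z : Fin (n + 1) → X × Y)) ^ l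
        * v (sndv (Fin.cons a z : Fin (n + 1) → X × Y)) ^ b ∂(piM n P) := by
      intro a
      simp only [fstv_cons, sndv_cons]
      rw [← mul_assoc]
      exact ih (fun x => u (Fin.cons a.1 x)) (fun y => v (Fin.cons a.2 y))
        (hcu.comp measurable_prodMk_left) (hcv.comp measurable_prodMk_left)
        (fun x => hu1 _) (fun y => hvm _) (fun y => hv1 _)
    refine le_trans ?_ (lintegral_mono step)
    have e : ∫⁻ a, C ^ n * (U a.1 ^ l * V a.2 ^ b) ∂P = C ^ n * ∫⁻ a, U a.1 ^ l * V a.2 ^ b ∂P := by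
      rw [lintegral_const_mul]
      exact ((hUm.comp measurable_fst).pow_const _).mul ((hVm.comp measurable_snd).pow_const _)
    rw [e]
    calc _ = C ^ n * (C * (∫⁻ x, U x ∂(m1 P)) ^ l * (∫⁻ y, V y ∂(m2 P)) ^ b) := by ring
      _ ≤ _ := by
        gcongr
        refine h U V hUm hVm (fun x => ?_) (fun y => ?_) (fun y => ?_)
        · calc U x ≤ ∫⁻ _, 1 ∂(piM n (m1 P)) := lintegral_mono fun _ => hu1 _
            _ = 1 := by simp
        · calc m = ∫⁻ _, m ∂(piM n (m2 P)) := by simp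
            _ ≤ V y := lintegral_mono fun _ => hvm _
        · calc V y ≤ ∫⁻ _, 1 ∂(piM n (m2 P)) := lintegral_mono fun _ => hv1 _
            _ = 1 := by simp

end Tensor

section KernelProd

variable (P : Measure (X × Y)) [IsProbabilityMeasure P] (κ : Kernel Y X) [IsMarkovKernel κ]

instance instkpi {n : ℕ} (y : Fin n → Y) : IsProbabilityMeasure (kpi κ y) := by
  unfold kpi; infer_instance

lemma measurable_kpi (n : ℕ) : Measurable (fun y : Fin n → Y => kpi κ y) := by
  refine Measurable.measure_of_isPiSystem_of_isProbabilityMeasure generateFrom_pi.symm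
    isPiSystem_pi ?_
  rintro s ⟨t, ht, rfl⟩
  simp only [kpi, Measure.pi_pi]
  refine Finset.measurable_prod _ fun i _ => ?_
  exact (Kernel.measurable_coe κ (ht i (mem_univ i))).comp (measurable_pi_apply i)

lemma measurable_kpi_apply {n : ℕ} {A : Set (Fin n → X)} (hA : MeasurableSet A) :
    Measurable (fun y : Fin n → Y => kpi κ y A) :=
  (Measure.measurable_coe hA).comp (measurable_kpi κ n)

/-- The product kernel. -/
def kpiK (n : ℕ) : Kernel (Fin n → Y) (Fin n → X) := ⟨fun y => kpi κ y, measurable_kpi κ n⟩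

instance (n : ℕ) : IsMarkovKernel (kpiK κ n) := ⟨fun y => instkpi κ y⟩

lemma P_eq (hκ : IsCondKernel P κ) : P = ((m2 P) ⊗ₘ κ).map Prod.swap := by
  refine Measure.ext_prod fun {s t} hs ht => ?_
  rw [Measure.map_apply measurable_swap (hs.prod ht), Set.preimage_swap_prod,
    Measure.compProd_apply_prod ht hs, hκ s t hs ht]

lemma P_apply (hκ : IsCondKernel P κ) {s : Set (X × Y)} (hs : MeasurableSet s) :
    P s = ∫⁻ y, κ y ((fun x => (x, y)) ⁻¹' s) ∂(m2 P) := by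
  conv_lhs => rw [P_eq P κ hκ]
  rw [Measure.map_apply measurable_swap hs, Measure.compProd_apply (measurable_swap hs)]
  rfl

lemma lintegral_piM_prod {Ω : Type*} [MeasurableSpace Ω] (ν : Measure Ω) [IsProbabilityMeasure ν]
    (n : ℕ) (g : Fin n → Ω → ℝ≥0∞) (hg : ∀ i, Measurable (g i)) :
    ∫⁻ y, ∏ i, g i (y i) ∂(piM n ν) = ∏ i, ∫⁻ a, g i a ∂ν := by
  induction n with
  | zero => simp
  | succ n ih =>
    rw [lintegral_piM_succ]
    · simp only [Fin.prod_univ_succ, Fin.cons_zero, Fin.cons_succ]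
      have : ∀ a, ∫⁻ z : Fin n → Ω, g 0 a * ∏ i, g (Fin.succ i) (z i) ∂(piM n ν)
          = g 0 a * ∏ i : Fin n, ∫⁻ a, g (Fin.succ i) a ∂ν := by
        intro a
        rw [lintegral_const_mul, ih (fun i => g i.succ) (fun i => hg _)]
        exact Finset.measurable_prod _ fun i _ => (hg _).comp (measurable_pi_apply i)
      simp only [this]
      rw [lintegral_mul_const _ (hg 0)]
    · exact Finset.measurable_prod _ fun i _ => (hg _).comp (measurable_pi_apply i)

lemma piM_eq (hκ : IsCondKernel P κ) (n : ℕ) :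
    piM n P = ((piM n (m2 P)) ⊗ₘ (kpiK κ n)).map (fun p i => (p.2 i, p.1 i)) := by
  have hm : Measurable (fun (p : (Fin n → Y) × (Fin n → X)) (i : Fin n) => (p.2 i, p.1 i)) := by
    fun_prop
  unfold piM
  refine Measure.pi_eq fun s hs => ?_
  rw [Measure.map_apply hm (MeasurableSet.univ_pi hs),
    Measure.compProd_apply (hm (MeasurableSet.univ_pi hs))]
  have e : ∀ y : Fin n → Y, kpiK κ n y (Prod.mk y ⁻¹'
      ((fun (p : (Fin n → Y) × (Fin n → X)) (i : Fin n) => (p.2 i, p.1 i)) ⁻¹' (univ.pi s)))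
      = ∏ i, κ (y i) ((fun x => (x, y i)) ⁻¹' (s i)) := by
    intro y
    change Measure.pi (fun i => κ (y i)) _ = _
    rw [← Measure.pi_pi]
    rfl
  simp only [e]
  have := lintegral_piM_prod (m2 P) n (fun i y => κ y ((fun x => (x, y)) ⁻¹' (s i))) (fun i =>
    Kernel.measurable_kernel_prodMk_right (hs i))
  unfold piM at this
  rw [this]
  exact Finset.prod_congr rfl fun i _ => (P_apply P κ hκ (hs i)).symm

lemma lintegral_cond (hκ : IsCondKernel P κ) (n : ℕ) {A : Set (Fin n → X)} (hA : MeasurableSet A)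
    (g : (Fin n → Y) → ℝ≥0∞) (hg : Measurable g) :
    ∫⁻ z, A.indicator 1 (fstv z) * g (sndv z) ∂(piM n P)
      = ∫⁻ y, kpi κ y A * g y ∂(piM n (m2 P)) := by
  have hm : Measurable (fun (p : (Fin n → Y) × (Fin n → X)) (i : Fin n) => (p.2 i, p.1 i)) := by
    fun_prop
  have hAi : Measurable (A.indicator (1 : (Fin n → X) → ℝ≥0∞)) := measurable_one.indicator hA
  have h1 : Measurable (fun z : Fin n → X × Y =>
      A.indicator (1 : (Fin n → X) → ℝ≥0∞) (fstv z) * g (sndv z)) :=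
    (hAi.comp measurable_fstv).mul (hg.comp measurable_sndv)
  rw [piM_eq P κ hκ, lintegral_map h1 hm]
  erw [Measure.lintegral_compProd (h1.comp hm)]
  refine lintegral_congr fun y => ?_
  change ∫⁻ x, A.indicator (1 : (Fin n → X) → ℝ≥0∞) x * g y ∂(kpi κ y) = _
  rw [lintegral_mul_const _ hAi, lintegral_indicator_one hA]

lemma map_fstv (n : ℕ) : (piM n P).map fstv = piM n (m1 P) := by
  unfold piM m1
  symm
  refine Measure.pi_eq fun s hs => ?_
  rw [Measure.map_apply measurable_fstv (MeasurableSet.univ_pi hs)]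
  have : fstv ⁻¹' (univ.pi s) = univ.pi (fun i => (Prod.fst ⁻¹' (s i) : Set (X × Y))) := by
    ext z; simp [fstv, Set.mem_pi]
  rw [this, Measure.pi_pi]
  refine Finset.prod_congr rfl fun i _ => ?_
  rw [Measure.map_apply measurable_fst (hs i)]

lemma lintegral_kpi (hκ : IsCondKernel P κ) (n : ℕ) {A : Set (Fin n → X)} (hA : MeasurableSet A) :
    ∫⁻ y, kpi κ y A ∂(piM n (m2 P)) = piM n (m1 P) A := by
  have := lintegral_cond P κ hκ n hA (fun _ => 1) measurable_const
  simp only [mul_one] at this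
  rw [← this, ← map_fstv, Measure.map_apply measurable_fstv hA,
    ← lintegral_indicator_one (measurable_fstv hA)]
  rfl

end KernelProd


/-! ### One-dimensional functional inequalities -/

section OneDim

variable (P : Measure (X × Y)) [IsProbabilityMeasure P]

lemma integrable_unit {Ω : Type*} [MeasurableSpace Ω] (P : Measure Ω) [IsProbabilityMeasure P]
    {u : Ω → ℝ} (hu : Measurable u) (hu0 : ∀ x, 0 ≤ u x) (hu1 : ∀ x, u x ≤ 1) : Integrable u P :=
  Integrable.of_bound hu.aestronglyMeasurable 1
    (Eventually.of_forall fun x => by rw [Real.norm_eq_abs, abs_of_nonneg (hu0 x)]; exact hu1 x)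

lemma integrable_log_of_bdd {Ω : Type*} [MeasurableSpace Ω] (P : Measure Ω) [IsProbabilityMeasure P]
    {v : Ω → ℝ} {m : ℝ} (hm : 0 < m) (hv : Measurable v) (hv0 : ∀ x, m ≤ v x)
    (hv1 : ∀ x, v x ≤ 1) : Integrable (fun x => Real.log (v x)) P :=
  Integrable.of_bound (hv.log).aestronglyMeasurable (-Real.log m)
    (Eventually.of_forall fun x => by
      rw [Real.norm_eq_abs, abs_of_nonpos (Real.log_nonpos (hm.le.trans (hv0 x)) (hv1 x))]
      exact neg_le_neg (Real.log_le_log hm (hv0 x)))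

lemma core_fwd {l b m : ℝ} (hb : 0 ≤ b) (hl0 : 0 ≤ l) (hm : 0 < m)
    {u : X → ℝ} {v : Y → ℝ} (hu : Measurable u) (hv : Measurable v)
    (hu0 : ∀ x, 0 ≤ u x) (hu1 : ∀ x, u x ≤ 1) (hv0 : ∀ y, m ≤ v y) (hv1 : ∀ y, v y ≤ 1)
    (hl : 0 < l ∨ ∀ x, u x = 1) (hZ : 0 < ∫ z, u z.1 ^ l * v z.2 ^ b ∂P) :
    ∃ Q : Measure (X × Y), IsProbabilityMeasure Q ∧ m1 Q ≪ m1 P ∧ m2 Q ≪ m2 P ∧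
      ∃ d s t eu ev : ℝ, KL Q P = d ∧ KL (m1 Q) (m1 P) = s ∧ KL (m2 Q) (m2 P) = t ∧
        0 ≤ s ∧ 0 ≤ t ∧ eu = ∫ x, Real.log (u x) ∂(m1 Q) ∧
        eu ≤ s + Real.log (∫ x, u x ∂(m1 P)) ∧ ev ≤ t + Real.log (∫ y, v y ∂(m2 P)) ∧
        d = l * eu + b * ev - Real.log (∫ z, u z.1 ^ l * v z.2 ^ b ∂P) := by
  set w : X × Y → ℝ := fun z => u z.1 ^ l * v z.2 ^ b with hw
  have hvp : ∀ y, 0 < v y := fun y => hm.trans_le (hv0 y)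
  have hwm : Measurable w :=
    ((hu.comp measurable_fst).pow_const _).mul ((hv.comp measurable_snd).pow_const _)
  have hw0 : ∀ z, 0 ≤ w z := fun z =>
    mul_nonneg (Real.rpow_nonneg (hu0 _) _) (Real.rpow_nonneg (hvp _).le _)
  have hw1 : ∀ z, w z ≤ 1 := fun z =>
    mul_le_one₀ (Real.rpow_le_one (hu0 _) (hu1 _) hl0) (Real.rpow_nonneg (hvp _).le _)
      (Real.rpow_le_one (hvp _).le (hv1 _) hb)
  obtain ⟨hprob, hle, hpos, hli, hKL⟩ := tilt_facts P w hwm hw0 hw1 hZ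
  set Z := ∫ z, w z ∂P with hZd
  set Q := tilt P w with hQ
  have hle1 : m1 Q ≤ ENNReal.ofReal Z⁻¹ • m1 P := by
    unfold m1
    rw [← Measure.map_smul]
    exact Measure.map_mono hle measurable_fst
  have hle2 : m2 Q ≤ ENNReal.ofReal Z⁻¹ • m2 P := by
    unfold m2
    rw [← Measure.map_smul]
    exact Measure.map_mono hle measurable_snd
  obtain ⟨hac1, hi1⟩ := ac_int_of_le (m1 Q) (m1 P) Z⁻¹ (by positivity) hle1
  obtain ⟨hac2, hi2⟩ := ac_int_of_le (m2 Q) (m2 P) Z⁻¹ (by positivity) hle2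
  have hup : ∀ᵐ z ∂Q, 0 < u z.1 := by
    rcases hl with h | h
    · filter_upwards [hpos] with z hz
      rcases (hu0 z.1).eq_or_lt with h' | h'
      · simp only [hw, ← h', Real.zero_rpow h.ne', zero_mul, lt_irrefl] at hz
      · exact h'
    · exact Eventually.of_forall fun z => by rw [h]; norm_num
  have hlv : Integrable (fun z : X × Y => Real.log (v z.2)) Q :=
    integrable_log_of_bdd Q hm (hv.comp measurable_snd) (fun z => hv0 z.2) (fun z => hv1 z.2)
  have heq : (fun z => Real.log (w z)) =ᵐ[Q]
      fun z => l * Real.log (u z.1) + b * Real.log (v z.2) := by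
    filter_upwards [hup] with z hz
    rw [hw]
    simp only
    rw [Real.log_mul (Real.rpow_pos_of_pos hz _).ne' (Real.rpow_pos_of_pos (hvp _) _).ne',
      Real.log_rpow hz, Real.log_rpow (hvp _)]
  have hlu : Integrable (fun z : X × Y => Real.log (u z.1)) Q := by
    rcases hl with h | h
    · have h1 := ((hli.congr heq).sub (hlv.const_mul b)).const_mul l⁻¹
      refine h1.congr (Eventually.of_forall fun z => ?_)
      simp only [Pi.sub_apply]
      field_simp
      ring
    · simp [h]
  have hlu1 : Integrable (fun x => Real.log (u x)) (m1 Q) := by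
    unfold m1
    rw [integrable_map_measure (hu.log).aestronglyMeasurable measurable_fst.aemeasurable]
    exact hlu
  have hlv1 : Integrable (fun x => Real.log (v x)) (m2 Q) := by
    unfold m2
    rw [integrable_map_measure (hv.log).aestronglyMeasurable measurable_snd.aemeasurable]
    exact hlv
  have hup1 : ∀ᵐ x ∂(m1 Q), 0 < u x := by
    unfold m1
    rw [ae_map_iff measurable_fst.aemeasurable (measurableSet_lt measurable_const hu)]
    exact hup
  refine ⟨Q, hprob, hac1, hac2, _, _, _, _, ∫ y, Real.log (v y) ∂(m2 Q), hKL, KL_of hac1 hi1,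
    KL_of hac2 hi2, KL_int_nonneg _ _ hac1 hi1, KL_int_nonneg _ _ hac2 hi2, rfl, ?_, ?_, ?_⟩
  · exact donsker_varadhan _ _ hac1 hi1 u hu hu0 hup1 (integrable_unit _ hu hu0 hu1) hlu1
  · exact donsker_varadhan _ _ hac2 hi2 v hv (fun y => (hvp y).le) (Eventually.of_forall hvp)
      (integrable_unit _ hv (fun y => (hvp y).le) hv1) hlv1
  · rw [integral_congr_ae heq, integral_add (hlu.const_mul _) (hlv.const_mul _),
      integral_const_mul, integral_const_mul]
    unfold m1 m2
    rw [integral_map measurable_fst.aemeasurable (hu.log).aestronglyMeasurable,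
      integral_map measurable_snd.aemeasurable (hv.log).aestronglyMeasurable]

lemma phiRinf_le (Q : Measure (X × Y)) [IsProbabilityMeasure Q] (h1 : m1 Q ≪ m1 P)
    (h2 : m2 Q ≪ m2 P) {d s t b : ℝ} {r : EReal} (hd : KL Q P = d) (hs : KL (m1 Q) (m1 P) = s)
    (ht : KL (m2 Q) (m2 P) = t) (ht0 : 0 ≤ t) (hr : divE t r = ((b * t : ℝ) : EReal)) :
    phiRinf P r s ≤ ((d - b * t : ℝ) : EReal) := by
  unfold phiRinf
  refine (iInf₂_le t ht0).trans ?_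
  rw [hr, EReal.coe_sub]
  refine EReal.sub_le_sub ?_ le_rfl
  unfold phiL
  refine (iInf₂_le (m1 Q) (m2 Q)).trans ?_
  refine (iInf₂_le (instm1 Q) (instm2 Q)).trans ?_
  refine (iInf₂_le h1 h2).trans ?_
  refine (iInf₂_le hs ht).trans ?_
  unfold Dmin
  refine (iInf₂_le Q ⟨inferInstance, rfl, rfl⟩).trans hd.le

lemma fwd_real {l b m c : ℝ} {r : EReal} (hb : 0 ≤ b) (hl0 : 0 ≤ l) (hm : 0 < m)
    (hr : ∀ t, divE t r = ((b * t : ℝ) : EReal))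
    (hF : ∀ s : ℝ, 0 ≤ s → ((l * s + c : ℝ) : EReal) ≤ phiRinf P r s)
    {u : X → ℝ} {v : Y → ℝ} (hu : Measurable u) (hv : Measurable v)
    (hu0 : ∀ x, 0 ≤ u x) (hu1 : ∀ x, u x ≤ 1) (hv0 : ∀ y, m ≤ v y) (hv1 : ∀ y, v y ≤ 1)
    (hl : 0 < l ∨ ∀ x, u x = 1) :
    ∫ z, u z.1 ^ l * v z.2 ^ b ∂P ≤
      Real.exp (-c) * (∫ x, u x ∂(m1 P)) ^ l * (∫ y, v y ∂(m2 P)) ^ b := by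
  have hvp : ∀ y, 0 < v y := fun y => hm.trans_le (hv0 y)
  have hU0 : 0 ≤ ∫ x, u x ∂(m1 P) := integral_nonneg hu0
  have hV : m ≤ ∫ y, v y ∂(m2 P) := by
    have := integral_mono (μ := m2 P) (integrable_const m)
      (integrable_unit _ hv (fun y => (hvp y).le) hv1) hv0
    simpa using this
  have hVp := hm.trans_le hV
  rcases le_or_gt (∫ z, u z.1 ^ l * v z.2 ^ b ∂P) 0 with hZ | hZ
  · refine hZ.trans ?_
    positivity
  obtain ⟨Q, hQ, h1, h2, d, s, t, eu, ev, hd, hs, ht, hs0, ht0, -, heu, hev, hde⟩ :=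
    core_fwd P hb hl0 hm hu hv hu0 hu1 hv0 hv1 hl hZ
  have hk := (hF s hs0).trans (phiRinf_le P Q h1 h2 hd hs ht ht0 (hr t))
  have hk' : l * s + c ≤ d - b * t := by exact_mod_cast hk
  have hUp : 0 < ∫ x, u x ∂(m1 P) := by
    rcases hU0.eq_or_lt with h | h
    · exfalso
      rcases hl with hl | hl
      · have h0 : u =ᵐ[m1 P] 0 :=
          (integral_eq_zero_iff_of_nonneg hu0 (integrable_unit _ hu hu0 hu1)).1 h.symm
        have h3 : ∀ᵐ z ∂P, u z.1 = 0 := ae_of_ae_map (f := Prod.fst) measurable_fst.aemeasurable h0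
        have : ∫ z, u z.1 ^ l * v z.2 ^ b ∂P = 0 := by
          rw [integral_congr_ae (g := fun _ => (0:ℝ))]
          · simp
          · filter_upwards [h3] with z hz
            rw [hz, Real.zero_rpow hl.ne', zero_mul]
        linarith
      · simp [hl] at h
    · exact h
  rw [← Real.log_le_log_iff hZ (by positivity), Real.log_mul (by positivity) (by positivity),
    Real.log_mul (by positivity) (by positivity), Real.log_exp, Real.log_rpow hUp,
    Real.log_rpow hVp]
  nlinarith [mul_le_mul_of_nonneg_left heu hl0, mul_le_mul_of_nonneg_left hev hb]

lemma lintegral_toReal {Ω : Type*} [MeasurableSpace Ω] (P : Measure Ω) [IsProbabilityMeasure P]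
    {u : Ω → ℝ≥0∞} (hu : Measurable u) (hu1 : ∀ x, u x ≤ 1) :
    ∫⁻ x, u x ∂P = ENNReal.ofReal (∫ x, (u x).toReal ∂P) := by
  rw [ofReal_integral_eq_lintegral_ofReal]
  · refine lintegral_congr fun x => ?_
    rw [ENNReal.ofReal_toReal (ne_top_of_le_ne_top ENNReal.one_ne_top (hu1 x))]
  · exact integrable_unit P hu.ennreal_toReal (fun x => ENNReal.toReal_nonneg)
      (fun x => ENNReal.toReal_le_of_le_ofReal zero_le_one (by simpa using hu1 x))
  · exact Eventually.of_forall fun x => ENNReal.toReal_nonneg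

lemma lintegral_prod_toReal {l b m : ℝ} (hl : 0 ≤ l) (hm : 0 < m)
    {u : X → ℝ≥0∞} {v : Y → ℝ≥0∞} (hu : Measurable u) (hv : Measurable v)
    (hu1 : ∀ x, u x ≤ 1) (hv0 : ∀ y, ENNReal.ofReal m ≤ v y) (hv1 : ∀ y, v y ≤ 1) :
    ∫⁻ z, u z.1 ^ l * v z.2 ^ b ∂P =
      ENNReal.ofReal (∫ z, (u z.1).toReal ^ l * (v z.2).toReal ^ b ∂P) := by
  have hvr : ∀ y, m ≤ (v y).toReal := fun y => by
    rw [← ENNReal.ofReal_le_iff_le_toReal (ne_top_of_le_ne_top ENNReal.one_ne_top (hv1 y))]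
    exact hv0 y
  have hvr1 : ∀ y, (v y).toReal ≤ 1 := fun y =>
    ENNReal.toReal_le_of_le_ofReal zero_le_one (by simpa using hv1 y)
  have hur1 : ∀ y, (u y).toReal ≤ 1 := fun y =>
    ENNReal.toReal_le_of_le_ofReal zero_le_one (by simpa using hu1 y)
  have hnn : ∀ z : X × Y, 0 ≤ (u z.1).toReal ^ l * (v z.2).toReal ^ b := fun z => by positivity
  rw [ofReal_integral_eq_lintegral_ofReal]
  · refine lintegral_congr fun z => ?_
    rw [ENNReal.ofReal_mul (by positivity), ← ENNReal.ofReal_rpow_of_nonneg (by positivity) hl,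
      ← ENNReal.ofReal_rpow_of_pos (hm.trans_le (hvr _)),
      ENNReal.ofReal_toReal (ne_top_of_le_ne_top ENNReal.one_ne_top (hu1 _)),
      ENNReal.ofReal_toReal (ne_top_of_le_ne_top ENNReal.one_ne_top (hv1 _))]
  · refine Integrable.of_bound (C := 1 + m ^ b) ?_ (Eventually.of_forall fun z => ?_)
    · exact (((hu.comp measurable_fst).ennreal_toReal.pow_const _).mul
        ((hv.comp measurable_snd).ennreal_toReal.pow_const _)).aestronglyMeasurable
    · rw [Real.norm_eq_abs, abs_of_nonneg (hnn z)]
      have h1 : (u z.1).toReal ^ l ≤ 1 := Real.rpow_le_one ENNReal.toReal_nonneg (hur1 _) hl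
      have h2 : (v z.2).toReal ^ b ≤ 1 + m ^ b := by
        have hp : 0 ≤ m ^ b := by positivity
        rcases le_total 0 b with hb | hb
        · have := Real.rpow_le_one ENNReal.toReal_nonneg (hvr1 z.2) hb
          linarith
        · have := Real.rpow_le_rpow_of_nonpos hm (hvr z.2) hb
          linarith
      calc _ ≤ 1 * (v z.2).toReal ^ b := by gcongr
        _ ≤ _ := by linarith
  · exact Eventually.of_forall hnn

lemma fwd_one {l b m c : ℝ} {r : EReal} (hb : 0 ≤ b) (hl0 : 0 ≤ l) (hm : 0 < m)
    (hr : ∀ t, divE t r = ((b * t : ℝ) : EReal))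
    (hF : ∀ s : ℝ, 0 ≤ s → ((l * s + c : ℝ) : EReal) ≤ phiRinf P r s)
    (u : X → ℝ≥0∞) (v : Y → ℝ≥0∞) (hu : Measurable u) (hv : Measurable v)
    (hu1 : ∀ x, u x ≤ 1) (hv0 : ∀ y, ENNReal.ofReal m ≤ v y) (hv1 : ∀ y, v y ≤ 1) :
    ∫⁻ z, u z.1 ^ l * v z.2 ^ b ∂P ≤ ENNReal.ofReal (Real.exp (-c)) *
      (∫⁻ x, u x ∂(m1 P)) ^ l * (∫⁻ y, v y ∂(m2 P)) ^ b := by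
  wlog h : 0 < l ∨ ∀ x, u x = 1 generalizing u
  · push Not at h
    have hl : l = 0 := le_antisymm h.1 hl0
    have := this (fun _ => 1) measurable_const (by simp) (Or.inr (by simp))
    simpa [hl] using this
  have hvr : ∀ y, m ≤ (v y).toReal := fun y => by
    rw [← ENNReal.ofReal_le_iff_le_toReal (ne_top_of_le_ne_top ENNReal.one_ne_top (hv1 y))]
    exact hv0 y
  have hvr1 : ∀ y, (v y).toReal ≤ 1 := fun y =>
    ENNReal.toReal_le_of_le_ofReal zero_le_one (by simpa using hv1 y)
  have hur1 : ∀ y, (u y).toReal ≤ 1 := fun y =>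
    ENNReal.toReal_le_of_le_ofReal zero_le_one (by simpa using hu1 y)
  rw [lintegral_prod_toReal P hl0 hm hu hv hu1 hv0 hv1, lintegral_toReal _ hu hu1,
    lintegral_toReal _ hv hv1,
    ENNReal.ofReal_rpow_of_nonneg (integral_nonneg fun _ => ENNReal.toReal_nonneg) hl0,
    ENNReal.ofReal_rpow_of_nonneg (integral_nonneg fun _ => ENNReal.toReal_nonneg) hb,
    ← ENNReal.ofReal_mul (by positivity), ← ENNReal.ofReal_mul (by positivity)]
  refine ENNReal.ofReal_le_ofReal ?_
  exact fwd_real P hb hl0 hm hr hF hu.ennreal_toReal hv.ennreal_toReal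
    (fun _ => ENNReal.toReal_nonneg) hur1 hvr hvr1
    (h.imp id (fun h x => by rw [h]; simp))

/-- The hypothesis driving the reverse inequality. -/
def RevHyp (l b c m : ℝ) : Prop :=
  ∀ (QX : Measure X) (s : ℝ) (v : Y → ℝ) (ε : ℝ), IsProbabilityMeasure QX → QX ≪ m1 P →
    KL QX (m1 P) = s → 0 ≤ s → Measurable v → (∀ y, m ≤ v y) → (∀ y, v y ≤ 1) → 0 < ε →
    ∃ Q : Measure (X × Y), IsProbabilityMeasure Q ∧ m1 Q = QX ∧ ∃ d : ℝ, KL Q P = d ∧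
      d - b * ∫ y, Real.log (v y) ∂(m2 Q) ≤ l * s + c - b * Real.log (∫ y, v y ∂(m2 P)) + ε

lemma rev_real {l b m c : ℝ} (hl : 0 < l) (hm : 0 < m) (hH : RevHyp P l b c m)
    {u : X → ℝ} {v : Y → ℝ} (hu : Measurable u) (hv : Measurable v)
    (hu0 : ∀ x, 0 ≤ u x) (hu1 : ∀ x, u x ≤ 1) (hv0 : ∀ y, m ≤ v y) (hv1 : ∀ y, v y ≤ 1)
    (hwi : Integrable (fun z : X × Y => u z.1 ^ l * v z.2 ^ b) P) :
    Real.exp (-c) * (∫ x, u x ∂(m1 P)) ^ l * (∫ y, v y ∂(m2 P)) ^ b ≤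
      ∫ z, u z.1 ^ l * v z.2 ^ b ∂P := by
  have hvp : ∀ y, 0 < v y := fun y => hm.trans_le (hv0 y)
  have hU0 : 0 ≤ ∫ x, u x ∂(m1 P) := integral_nonneg hu0
  have hV : m ≤ ∫ y, v y ∂(m2 P) := by
    have := integral_mono (μ := m2 P) (integrable_const m)
      (integrable_unit _ hv (fun y => (hvp y).le) hv1) hv0
    simpa using this
  have hVp := hm.trans_le hV
  have hw0 : ∀ z : X × Y, 0 ≤ u z.1 ^ l * v z.2 ^ b := fun z =>
    mul_nonneg (Real.rpow_nonneg (hu0 _) _) (Real.rpow_nonneg (hvp _).le _)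
  rcases hU0.eq_or_lt with hU | hU
  · rw [← hU, Real.zero_rpow hl.ne', mul_zero, zero_mul]
    exact integral_nonneg hw0
  obtain ⟨hprob, hle, hpos, hli, hKL⟩ := tilt_facts (m1 P) u hu hu0 hu1 hU
  set QX := tilt (m1 P) u with hQX
  have hacX : QX ≪ m1 P := by rw [hQX]; exact withDensity_absolutelyContinuous _ _
  have hs0 : 0 ≤ ∫ x, Real.log (u x) ∂QX - Real.log (∫ x, u x ∂(m1 P)) := by
    have := KL_nonneg QX (m1 P)
    rw [hKL] at this
    exact_mod_cast this
  -- approximate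
  have key : ∀ ε > 0, l * Real.log (∫ x, u x ∂(m1 P)) + b * Real.log (∫ y, v y ∂(m2 P)) - c - ε ≤
      Real.log (∫ z, u z.1 ^ l * v z.2 ^ b ∂P) ∧ 0 < ∫ z, u z.1 ^ l * v z.2 ^ b ∂P := by
    intro ε hε
    obtain ⟨Q, hQ, hQ1, d, hd, hdle⟩ := hH QX _ v ε hprob hacX hKL hs0 hv hv0 hv1 hε
    obtain ⟨hac, hi, hdi⟩ := of_KL_ne_top (Q := Q) (P := P) (by rw [hd]; exact EReal.coe_ne_top d)
    rw [hd] at hdi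
    have hdi' : d = ∫ z, Real.log (Q.rnDeriv P z).toReal ∂Q := by exact_mod_cast hdi
    have hup : ∀ᵐ z ∂Q, 0 < u z.1 := by
      rw [← hQ1] at hpos
      exact ae_of_ae_map (f := Prod.fst) measurable_fst.aemeasurable hpos
    have hlu : Integrable (fun z : X × Y => Real.log (u z.1)) Q := by
      rw [← hQ1] at hli
      unfold m1 at hli
      rwa [integrable_map_measure (hu.log).aestronglyMeasurable measurable_fst.aemeasurable] at hli
    have hlv : Integrable (fun z : X × Y => Real.log (v z.2)) Q :=
      integrable_log_of_bdd Q hm (hv.comp measurable_snd) (fun z => hv0 z.2) (fun z => hv1 z.2)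
    have hwp : ∀ᵐ z ∂Q, 0 < u z.1 ^ l * v z.2 ^ b := by
      filter_upwards [hup] with z hz
      exact mul_pos (Real.rpow_pos_of_pos hz _) (Real.rpow_pos_of_pos (hvp _) _)
    have heq : (fun z : X × Y => Real.log (u z.1 ^ l * v z.2 ^ b)) =ᵐ[Q]
        fun z => l * Real.log (u z.1) + b * Real.log (v z.2) := by
      filter_upwards [hup] with z hz
      rw [Real.log_mul (Real.rpow_pos_of_pos hz _).ne' (Real.rpow_pos_of_pos (hvp _) _).ne',
        Real.log_rpow hz, Real.log_rpow (hvp _)]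
    have hwm : Measurable (fun z : X × Y => u z.1 ^ l * v z.2 ^ b) :=
      ((hu.comp measurable_fst).pow_const _).mul ((hv.comp measurable_snd).pow_const _)
    have hsum : Integrable (fun z : X × Y => l * Real.log (u z.1) + b * Real.log (v z.2)) Q :=
      (hlu.const_mul _).add (hlv.const_mul _)
    have hdv := donsker_varadhan Q P hac hi _ hwm hw0 hwp hwi (hsum.congr heq.symm)
    rw [integral_congr_ae heq, integral_add (hlu.const_mul _) (hlv.const_mul _),
      integral_const_mul, integral_const_mul, ← hdi'] at hdv
    have e1 : ∫ z, Real.log (u z.1) ∂Q = ∫ x, Real.log (u x) ∂QX := by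
      rw [← hQ1]
      unfold m1
      rw [integral_map measurable_fst.aemeasurable (hu.log).aestronglyMeasurable]
    have e2 : ∫ z, Real.log (v z.2) ∂Q = ∫ x, Real.log (v x) ∂(m2 Q) := by
      unfold m2
      rw [integral_map measurable_snd.aemeasurable (hv.log).aestronglyMeasurable]
    rw [e1, e2] at hdv
    refine ⟨by nlinarith, ?_⟩
    rcases (integral_nonneg (μ := P) (f := fun z : X × Y => u z.1 ^ l * v z.2 ^ b) hw0).eq_or_lt with h | h
    · exfalso
      have h0 := (integral_eq_zero_iff_of_nonneg hw0 hwi).1 h.symm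
      have h1 : ∀ᵐ z ∂Q, u z.1 ^ l * v z.2 ^ b = 0 := hac.ae_le h0
      have h2 : ∀ᵐ x ∂Q, False := by
        filter_upwards [h1, hwp] with x hx hx'
        exact hx'.ne' hx
      have : Q = 0 := by simpa using h2
      exact IsProbabilityMeasure.ne_zero Q this
    · exact h
  have hZ := (key 1 one_pos).2
  rw [← Real.log_le_log_iff (by positivity) hZ, Real.log_mul (by positivity) (by positivity),
    Real.log_mul (by positivity) (by positivity), Real.log_exp, Real.log_rpow hU,
    Real.log_rpow hVp]
  refine le_of_forall_pos_le_add fun ε hε => ?_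
  have := (key ε hε).1
  linarith

lemma rev_one {l b m c : ℝ} (hl : 0 < l) (hm : 0 < m) (hH : RevHyp P l b c m)
    (u : X → ℝ≥0∞) (v : Y → ℝ≥0∞) (hu : Measurable u) (hv : Measurable v)
    (hu1 : ∀ x, u x ≤ 1) (hv0 : ∀ y, ENNReal.ofReal m ≤ v y) (hv1 : ∀ y, v y ≤ 1) :
    ENNReal.ofReal (Real.exp (-c)) *
      (∫⁻ x, u x ∂(m1 P)) ^ l * (∫⁻ y, v y ∂(m2 P)) ^ b ≤ ∫⁻ z, u z.1 ^ l * v z.2 ^ b ∂P := by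
  have hvr : ∀ y, m ≤ (v y).toReal := fun y => by
    rw [← ENNReal.ofReal_le_iff_le_toReal (ne_top_of_le_ne_top ENNReal.one_ne_top (hv1 y))]
    exact hv0 y
  have hvr1 : ∀ y, (v y).toReal ≤ 1 := fun y =>
    ENNReal.toReal_le_of_le_ofReal zero_le_one (by simpa using hv1 y)
  have hur1 : ∀ y, (u y).toReal ≤ 1 := fun y =>
    ENNReal.toReal_le_of_le_ofReal zero_le_one (by simpa using hu1 y)
  have hV : m ≤ ∫ y, (v y).toReal ∂(m2 P) := by
    have := integral_mono (μ := m2 P) (integrable_const m)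
      (integrable_unit _ hv.ennreal_toReal (fun y => ENNReal.toReal_nonneg) hvr1) hvr
    simpa using this
  have hwi : Integrable (fun z : X × Y => (u z.1).toReal ^ l * (v z.2).toReal ^ b) P := by
    refine Integrable.of_bound (C := 1 + m ^ b) ?_ (Eventually.of_forall fun z => ?_)
    · exact (((hu.comp measurable_fst).ennreal_toReal.pow_const _).mul
        ((hv.comp measurable_snd).ennreal_toReal.pow_const _)).aestronglyMeasurable
    · rw [Real.norm_eq_abs, abs_of_nonneg (by positivity)]
      have h1 : (u z.1).toReal ^ l ≤ 1 := Real.rpow_le_one ENNReal.toReal_nonneg (hur1 _) hl.le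
      have h2 : (v z.2).toReal ^ b ≤ 1 + m ^ b := by
        have hp : 0 ≤ m ^ b := by positivity
        rcases le_total 0 b with hb | hb
        · have := Real.rpow_le_one ENNReal.toReal_nonneg (hvr1 z.2) hb
          linarith
        · have := Real.rpow_le_rpow_of_nonpos hm (hvr z.2) hb
          linarith
      calc _ ≤ 1 * (v z.2).toReal ^ b := by gcongr
        _ ≤ _ := by linarith
  rw [lintegral_prod_toReal P hl.le hm hu hv hu1 hv0 hv1, lintegral_toReal _ hu hu1,
    lintegral_toReal _ hv hv1,
    ENNReal.ofReal_rpow_of_nonneg (integral_nonneg fun _ => ENNReal.toReal_nonneg) hl.le,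
    ENNReal.ofReal_rpow_of_pos (hm.trans_le hV),
    ← ENNReal.ofReal_mul (by positivity), ← ENNReal.ofReal_mul (by positivity)]
  refine ENNReal.ofReal_le_ofReal ?_
  exact rev_real P hl hm hH hu.ennreal_toReal hv.ennreal_toReal
    (fun _ => ENNReal.toReal_nonneg) hur1 hvr hvr1 hwi

end OneDim


/-! ### Regularisation and limiting arguments -/

section Limits

/-- The regularisation parameter. -/
def epsk (k : ℕ) : ℝ := 1 / ((k : ℝ) + 1)

lemma epsk_pos (k : ℕ) : 0 < epsk k := by unfold epsk; positivity

lemma epsk_le (k : ℕ) : epsk k ≤ 1 := by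
  unfold epsk
  rw [div_le_one (by positivity)]
  linarith [(Nat.cast_nonneg k : (0:ℝ) ≤ k)]

lemma epsk_anti : Antitone epsk := by
  intro i j h
  unfold epsk
  have : (i : ℝ) ≤ j := by exact_mod_cast h
  exact one_div_le_one_div_of_le (by positivity) (by linarith)

lemma epsk_tendsto : Tendsto (fun k => ENNReal.ofReal (epsk k)) atTop (𝓝 0) := by
  have h : Tendsto epsk atTop (𝓝 0) := tendsto_one_div_add_atTop_nhds_zero_nat
  have h2 := (ENNReal.continuous_ofReal.tendsto 0).comp h
  rw [ENNReal.ofReal_zero] at h2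
  exact h2

lemma enn_rpow_anti {q : ℝ} (hq : q ≤ 0) {a b : ℝ≥0∞} (h : a ≤ b) : b ^ q ≤ a ^ q := by
  have e : q = -(-q) := by ring
  rw [e, ENNReal.rpow_neg b, ENNReal.rpow_neg a]
  exact ENNReal.inv_le_inv.2 (ENNReal.rpow_le_rpow h (by linarith))

variable {Ω : Type*} [MeasurableSpace Ω] (ν : Measure Ω) [IsProbabilityMeasure ν]

lemma reg_tendsto {f : Ω → ℝ≥0∞} (hf : Measurable f) (hf1 : ∀ x, f x ≤ 1) (q : ℝ) :
    Tendsto (fun k => ∫⁻ x, (max (f x) (ENNReal.ofReal (epsk k))) ^ q ∂ν) atTop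
      (𝓝 (∫⁻ x, f x ^ q ∂ν)) := by
  have hlim : ∀ x, Tendsto (fun k => (max (f x) (ENNReal.ofReal (epsk k))) ^ q) atTop
      (𝓝 (f x ^ q)) := by
    intro x
    have h1 : Tendsto (fun k => max (f x) (ENNReal.ofReal (epsk k))) atTop (𝓝 (f x)) := by
      have := (tendsto_const_nhds (x := f x)).max epsk_tendsto
      simpa using this
    exact ((ENNReal.continuous_rpow_const (y := q)).tendsto _).comp h1
  have hmeas : ∀ k, Measurable fun x => (max (f x) (ENNReal.ofReal (epsk k))) ^ q :=
    fun k => (hf.max measurable_const).pow_const _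
  rcases le_total 0 q with hq | hq
  · refine tendsto_lintegral_of_dominated_convergence (fun _ => 1) hmeas (fun k => ?_) (by simp)
      (Eventually.of_forall hlim)
    refine Eventually.of_forall fun x => ?_
    refine ENNReal.rpow_le_one (max_le (hf1 x) ?_) hq
    exact ENNReal.ofReal_le_one.2 (epsk_le k)
  · refine lintegral_tendsto_of_tendsto_of_monotone (fun k => (hmeas k).aemeasurable) ?_
      (Eventually.of_forall hlim)
    refine Eventually.of_forall fun x i j hij => ?_
    refine enn_rpow_anti hq ?_
    exact max_le_max le_rfl (ENNReal.ofReal_le_ofReal (epsk_anti hij))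

lemma fwd_final {f : Ω → ℝ≥0∞} (hf : Measurable f) (hf1 : ∀ x, f x ≤ 1) {q : ℝ} (hq : 1 ≤ q)
    {D : ℝ≥0∞} (hD : D ≠ ⊤)
    (h : ∀ k, ∫⁻ x, f x * (max (f x) (ENNReal.ofReal (epsk k))) ^ (q - 1) ∂ν ≤
      D * (∫⁻ x, (max (f x) (ENNReal.ofReal (epsk k))) ^ q ∂ν) ^ ((q - 1) / q)) :
    (∫⁻ x, f x ^ q ∂ν) ^ (1 / q) ≤ D := by
  have hq0 : 0 < q := by linarith
  have hZ : ∫⁻ x, f x ^ q ∂ν ≤ D * (∫⁻ x, f x ^ q ∂ν) ^ ((q - 1) / q) := by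
    have hT := ENNReal.Tendsto.const_mul (a := D)
      (((ENNReal.continuous_rpow_const (y := (q - 1) / q)).tendsto _).comp
      (reg_tendsto ν hf hf1 q)) (Or.inr hD)
    refine ge_of_tendsto' hT fun k => le_trans ?_ (h k)
    refine lintegral_mono fun x => ?_
    calc f x ^ q = f x ^ (1 + (q - 1)) := by ring_nf
      _ = f x ^ (1:ℝ) * f x ^ (q - 1) :=
        ENNReal.rpow_add_of_nonneg _ _ zero_le_one (by linarith)
      _ ≤ _ := by
        rw [ENNReal.rpow_one]
        exact mul_le_mul' le_rfl (ENNReal.rpow_le_rpow (le_max_left _ _) (by linarith))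
  set Z := ∫⁻ x, f x ^ q ∂ν with hZd
  have hZ1 : Z ≤ 1 := by
    calc Z ≤ ∫⁻ x, 1 ∂ν := lintegral_mono fun x => ENNReal.rpow_le_one (hf1 x) hq0.le
      _ = 1 := by simp
  have hZt : Z ≠ ⊤ := ne_top_of_le_ne_top ENNReal.one_ne_top hZ1
  rcases eq_or_ne Z 0 with h0 | h0
  · rw [h0, ENNReal.zero_rpow_of_pos (by positivity)]
    exact bot_le
  have e : 1 / q = 1 - (q - 1) / q := by field_simp; ring
  have hpow : Z = Z ^ (1 / q) * Z ^ ((q - 1) / q) := by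
    rw [← ENNReal.rpow_add _ _ h0 hZt, e, sub_add_cancel, ENNReal.rpow_one]
  have h1 : Z ^ ((q - 1) / q) ≠ 0 := by
    simp [ENNReal.rpow_eq_zero_iff, h0, hZt]
  have h2 : Z ^ ((q - 1) / q) ≠ ⊤ := ENNReal.rpow_ne_top_of_ne_zero h0 hZt
  refine (ENNReal.mul_le_mul_iff_left h1 h2).1 ?_
  rw [← hpow]
  exact hZ

lemma rev_final {f : Ω → ℝ≥0∞} (hf : Measurable f) (hf1 : ∀ x, f x ≤ 1) {q : ℝ} (hq : q ≠ 0)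
    {D : ℝ≥0∞}
    (h : ∀ k, D * (∫⁻ x, (max (f x) (ENNReal.ofReal (epsk k))) ^ q ∂ν) ^ ((q - 1) / q) ≤
      ∫⁻ x, f x * (max (f x) (ENNReal.ofReal (epsk k))) ^ (q - 1) ∂ν) :
    D ≤ (∫⁻ x, f x ^ q ∂ν) ^ (1 / q) := by
  have hT := ((ENNReal.continuous_rpow_const (y := 1 / q)).tendsto _).comp
      (reg_tendsto ν hf hf1 q)
  refine ge_of_tendsto' hT fun k => ?_
  simp only [Function.comp]
  set e := ENNReal.ofReal (epsk k) with he
  have he0 : e ≠ 0 := by simpa [he] using epsk_pos k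
  have he1 : e ≤ 1 := ENNReal.ofReal_le_one.2 (epsk_le k)
  have heT : e ≠ ⊤ := ENNReal.ofReal_ne_top
  have hg0 : ∀ x, max (f x) e ≠ 0 := fun x => (lt_of_lt_of_le (pos_iff_ne_zero.2 he0)
    (le_max_right _ _)).ne'
  have hg1 : ∀ x, max (f x) e ≤ 1 := fun x => max_le (hf1 x) he1
  have hgT : ∀ x, max (f x) e ≠ ⊤ := fun x => ne_top_of_le_ne_top ENNReal.one_ne_top (hg1 x)
  have hle : ∫⁻ x, f x * (max (f x) e) ^ (q - 1) ∂ν ≤ ∫⁻ x, (max (f x) e) ^ q ∂ν := by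
    refine lintegral_mono fun x => ?_
    calc f x * (max (f x) e) ^ (q - 1) ≤ max (f x) e * (max (f x) e) ^ (q - 1) := by
          gcongr; exact le_max_left _ _
      _ = (max (f x) e) ^ (1:ℝ) * (max (f x) e) ^ (q - 1) := by rw [ENNReal.rpow_one]
      _ = _ := by rw [← ENNReal.rpow_add _ _ (hg0 x) (hgT x)]; congr 1; ring
  have hk := (h k).trans hle
  set Z := ∫⁻ x, (max (f x) e) ^ q ∂ν with hZd
  have hbd : ∃ a b : ℝ≥0∞, a ≠ 0 ∧ b ≠ ⊤ ∧ a ≤ Z ∧ Z ≤ b := by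
    rcases le_total 0 q with hq' | hq'
    · refine ⟨e ^ q, 1, ?_, ENNReal.one_ne_top, ?_, ?_⟩
      · simp [ENNReal.rpow_eq_zero_iff, he0, heT]
      · calc e ^ q = ∫⁻ x, e ^ q ∂ν := by simp
          _ ≤ _ := lintegral_mono fun x => by gcongr; exact le_max_right _ _
      · calc Z ≤ ∫⁻ x, 1 ∂ν := lintegral_mono fun x => ENNReal.rpow_le_one (hg1 x) hq'
          _ = 1 := by simp
    · refine ⟨1, e ^ q, one_ne_zero, ENNReal.rpow_ne_top_of_ne_zero he0 heT, ?_, ?_⟩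
      · calc (1:ℝ≥0∞) = ∫⁻ x, 1 ∂ν := by simp
          _ ≤ _ := lintegral_mono fun x => by
            have := enn_rpow_anti hq' (hg1 x)
            simpa using this
      · calc Z ≤ ∫⁻ x, e ^ q ∂ν := lintegral_mono fun x =>
              enn_rpow_anti hq' (le_max_right _ _)
          _ = _ := by simp
  obtain ⟨a, b, ha, hb, haZ, hZb⟩ := hbd
  have h0 : Z ≠ 0 := (lt_of_lt_of_le (pos_iff_ne_zero.2 ha) haZ).ne'
  have hZt : Z ≠ ⊤ := ne_top_of_le_ne_top hb hZb
  have e : 1 / q = 1 - (q - 1) / q := by field_simp; ring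
  have hpow : Z = Z ^ (1 / q) * Z ^ ((q - 1) / q) := by
    rw [← ENNReal.rpow_add _ _ h0 hZt, e, sub_add_cancel, ENNReal.rpow_one]
  have h1 : Z ^ ((q - 1) / q) ≠ 0 := by
    simp [ENNReal.rpow_eq_zero_iff, h0, hZt]
  have h2 : Z ^ ((q - 1) / q) ≠ ⊤ := ENNReal.rpow_ne_top_of_ne_zero h0 hZt
  refine (ENNReal.mul_le_mul_iff_left h1 h2).1 ?_
  rw [← hpow]
  exact hk

end Limits

section NDim

variable (P : Measure (X × Y)) [IsProbabilityMeasure P] (κ : Kernel Y X) [IsMarkovKernel κ]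

lemma kpi_le_one {n : ℕ} (y : Fin n → Y) (A : Set (Fin n → X)) : kpi κ y A ≤ 1 := prob_le_one

lemma fwd_n (hκ : IsCondKernel P κ) (n : ℕ) {q l c : ℝ} {r : EReal} (hq : 1 ≤ q) (hl0 : 0 ≤ l)
    (hr : ∀ t, divE t r = (((q - 1) / q * t : ℝ) : EReal))
    (hF : ∀ s : ℝ, 0 ≤ s → ((l * s + c : ℝ) : EReal) ≤ phiRinf P r s)
    {A : Set (Fin n → X)} (hA : MeasurableSet A) :
    enorm (piM n (m2 P)) (fun y => kpi κ y A) q ≤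
      ENNReal.ofReal (Real.exp (-c)) ^ n * (piM n (m1 P) A) ^ l := by
  have hq0 : 0 < q := by linarith
  have hf := measurable_kpi_apply κ hA
  unfold enorm
  refine fwd_final (piM n (m2 P)) hf (fun y => kpi_le_one κ y A) hq ?_ fun k => ?_
  · refine ENNReal.mul_ne_top (ENNReal.pow_ne_top ENNReal.ofReal_ne_top) ?_
    exact ENNReal.rpow_ne_top_of_nonneg hl0 (measure_ne_top _ _)
  set e := ENNReal.ofReal (epsk k) with he
  have he1 : e ≤ 1 := ENNReal.ofReal_le_one.2 (epsk_le k)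
  have hg1 : ∀ y : Fin n → Y, max (kpi κ y A) e ≤ 1 := fun y => max_le (kpi_le_one κ y A) he1
  have hgm : Measurable fun y : Fin n → Y => max (kpi κ y A) e := hf.max measurable_const
  have hT := tensor_fwd P l ((q - 1) / q) (ENNReal.ofReal (epsk k ^ q)) _
    (fun u v hu hv hu1 hv0 hv1 => fwd_one P (div_nonneg (by linarith) hq0.le) hl0
      (Real.rpow_pos_of_pos (epsk_pos k) q) hr hF u v hu hv hu1 hv0 hv1) n
    (A.indicator 1) (fun y => (max (kpi κ y A) e) ^ q)
    (measurable_one.indicator hA) (hgm.pow_const _)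
    (fun x => by by_cases hx : x ∈ A <;> simp [hx])
    (fun y => by
      rw [← ENNReal.ofReal_rpow_of_pos (epsk_pos k)]
      exact ENNReal.rpow_le_rpow (le_max_right _ _) hq0.le)
    (fun y => ENNReal.rpow_le_one (hg1 y) hq0.le)
  rw [lintegral_indicator_one hA] at hT
  rw [← lintegral_cond P κ hκ n hA (fun y => (max (kpi κ y A) e) ^ (q - 1)) (hgm.pow_const _)]
  refine le_trans (lintegral_mono fun z => ?_) hT
  have e1 : ((max (kpi κ (sndv z) A) e) ^ q) ^ ((q - 1) / q) =
      (max (kpi κ (sndv z) A) e) ^ (q - 1) := by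
    rw [← ENNReal.rpow_mul]; congr 1; field_simp
  simp only [e1]
  gcongr
  by_cases hx : fstv z ∈ A
  · simp [hx]
  · simp [hx]

lemma rev_n (hκ : IsCondKernel P κ) (n : ℕ) {q l c : ℝ} (hq : q < 1) (hq0 : q ≠ 0) (hl : 0 < l)
    (hH : ∀ m, 0 < m → RevHyp P l ((q - 1) / q) c m)
    {A : Set (Fin n → X)} (hA : MeasurableSet A) :
    ENNReal.ofReal (Real.exp (-c)) ^ n * (piM n (m1 P) A) ^ l ≤
    enorm (piM n (m2 P)) (fun y => kpi κ y A) q := by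
  have hf := measurable_kpi_apply κ hA
  unfold enorm
  refine rev_final (piM n (m2 P)) hf (fun y => kpi_le_one κ y A) hq0 fun k => ?_
  set e := ENNReal.ofReal (epsk k) with he
  have he0 : e ≠ 0 := by simpa [he] using epsk_pos k
  have heT : e ≠ ⊤ := ENNReal.ofReal_ne_top
  have he1 : e ≤ 1 := ENNReal.ofReal_le_one.2 (epsk_le k)
  have hg1 : ∀ y : Fin n → Y, max (kpi κ y A) e ≤ 1 := fun y => max_le (kpi_le_one κ y A) he1
  have hgm : Measurable fun y : Fin n → Y => max (kpi κ y A) e := hf.max measurable_const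
  have hLm : ∃ L : ℝ≥0∞, ∃ m : ℝ, 0 < m ∧ L ≠ 0 ∧ L ≠ ⊤ ∧
      (∀ y : Fin n → Y, ENNReal.ofReal m ≤ L * (max (kpi κ y A) e) ^ q) ∧
      (∀ y : Fin n → Y, L * (max (kpi κ y A) e) ^ q ≤ 1) := by
    rcases hq0.lt_or_gt with hq' | hq'
    · refine ⟨e ^ (-q), epsk k ^ (-q), Real.rpow_pos_of_pos (epsk_pos k) _,
        by simp [ENNReal.rpow_eq_zero_iff, he0, heT], ENNReal.rpow_ne_top_of_ne_zero he0 heT,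
        fun y => ?_, fun y => ?_⟩
      · rw [← ENNReal.ofReal_rpow_of_pos (epsk_pos k)]
        have := enn_rpow_anti hq'.le (hg1 y)
        rw [ENNReal.one_rpow] at this
        exact le_mul_of_one_le_right' this
      · calc e ^ (-q) * (max (kpi κ y A) e) ^ q ≤ e ^ (-q) * e ^ q := by
              refine mul_le_mul' le_rfl ?_
              exact enn_rpow_anti hq'.le (le_max_right _ _)
          _ = 1 := by rw [← ENNReal.rpow_add _ _ he0 heT]; simp
    · refine ⟨1, epsk k ^ q, Real.rpow_pos_of_pos (epsk_pos k) _, one_ne_zero,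
        ENNReal.one_ne_top, fun y => ?_, fun y => ?_⟩
      · rw [← ENNReal.ofReal_rpow_of_pos (epsk_pos k), one_mul]
        exact ENNReal.rpow_le_rpow (le_max_right _ _) hq'.le
      · rw [one_mul]
        exact ENNReal.rpow_le_one (hg1 y) hq'.le
  obtain ⟨L, m, hm, hL0, hLT, hv0, hv1⟩ := hLm
  have hT := tensor_rev P l ((q - 1) / q) (ENNReal.ofReal m) _
    (fun u v hu hv hu1 hv0 hv1 => rev_one P hl hm (hH m hm) u v hu hv hu1 hv0 hv1) n
    (A.indicator 1) (fun y => L * (max (kpi κ y A) e) ^ q)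
    (measurable_one.indicator hA) ((hgm.pow_const _).const_mul L)
    (fun x => by by_cases hx : x ∈ A <;> simp [hx]) hv0 hv1
  rw [lintegral_indicator_one hA, lintegral_const_mul L (hgm.pow_const _)] at hT
  rw [← lintegral_cond P κ hκ n hA (fun y => (max (kpi κ y A) e) ^ (q - 1)) (hgm.pow_const _)]
  have hgp : ∀ y : Fin n → Y, (max (kpi κ y A) e) ^ q ≠ ⊤ := fun y =>
    ENNReal.rpow_ne_top_of_ne_zero (lt_of_lt_of_le (pos_iff_ne_zero.2 he0)
      (le_max_right _ _)).ne' (ne_top_of_le_ne_top ENNReal.one_ne_top (hg1 y))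
  have hZt : ∫⁻ y, (max (kpi κ y A) e) ^ q ∂(piM n (m2 P)) ≠ ⊤ := by
    intro hh
    have h1 : L * ∫⁻ y, (max (kpi κ y A) e) ^ q ∂(piM n (m2 P)) ≤ 1 := by
      rw [← lintegral_const_mul L (hgm.pow_const _)]
      calc _ ≤ ∫⁻ y, 1 ∂(piM n (m2 P)) := lintegral_mono hv1
        _ = 1 := by simp
    rw [hh, ENNReal.mul_top hL0] at h1
    exact absurd h1 (by simp)
  rw [ENNReal.mul_rpow_of_ne_top hLT hZt] at hT
  have hLb0 : L ^ ((q - 1) / q) ≠ 0 := by simp [ENNReal.rpow_eq_zero_iff, hL0, hLT]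
  have hLbT : L ^ ((q - 1) / q) ≠ ⊤ := ENNReal.rpow_ne_top_of_ne_zero hL0 hLT
  refine (ENNReal.mul_le_mul_iff_right hLb0 hLbT).1 ?_
  refine le_trans (le_of_eq (by ring)) (hT.trans ?_)
  rw [← lintegral_const_mul]
  swap
  · exact ((measurable_one.indicator hA).comp measurable_fstv).mul
      ((hgm.pow_const _).comp measurable_sndv)
  refine lintegral_mono fun z => ?_
  simp only
  rw [ENNReal.mul_rpow_of_ne_top hLT (hgp _), ← ENNReal.rpow_mul]
  rw [show q * ((q - 1) / q) = q - 1 by field_simp]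
  refine le_of_eq ?_
  have hu : (A.indicator 1 (fstv z) : ℝ≥0∞) ^ l = A.indicator 1 (fstv z) := by
    by_cases hx : fstv z ∈ A
    · simp [hx]
    · simp [hx, hl]
  rw [hu]
  ring

end NDim

/-! ### Conversion between logarithmic and multiplicative forms -/

section Conv

lemma sup_conv {n : ℕ} (hn : 1 ≤ n) {K : ℝ} {S : ℝ≥0∞}
    (h : S ≤ ENNReal.ofReal (Real.exp (-((n : ℝ) * K)))) :
    (K : EReal) ≤ -((((n : ℝ)⁻¹ : ℝ) : EReal) * elog S) := by
  have hn0 : (0:ℝ) < n := by exact_mod_cast hn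
  have hST : S ≠ ⊤ := ne_top_of_le_ne_top ENNReal.ofReal_ne_top h
  unfold elog
  rcases eq_or_ne S 0 with h0 | h0
  · rw [if_pos h0, EReal.coe_mul_bot_of_pos (by positivity)]
    simp
  · rw [if_neg h0, if_neg hST, ← EReal.coe_mul, ← EReal.coe_neg, EReal.coe_le_coe_iff]
    have hp : 0 < S.toReal := ENNReal.toReal_pos h0 hST
    have h1 : S.toReal ≤ Real.exp (-((n : ℝ) * K)) :=
      ENNReal.toReal_le_of_le_ofReal (Real.exp_pos _).le h
    have h2 : Real.log S.toReal ≤ -((n : ℝ) * K) := by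
      rw [← Real.log_exp (-((n : ℝ) * K))]
      exact Real.log_le_log hp h1
    have h3 := mul_le_mul_of_nonneg_left h2 (inv_nonneg.2 hn0.le)
    have h4 : (n : ℝ)⁻¹ * -((n : ℝ) * K) = -K := by field_simp
    linarith

lemma inf_conv {n : ℕ} (hn : 1 ≤ n) {K : ℝ} {S : ℝ≥0∞}
    (h : ENNReal.ofReal (Real.exp (-((n : ℝ) * K))) ≤ S) :
    -((((n : ℝ)⁻¹ : ℝ) : EReal) * elog S) ≤ (K : EReal) := by
  have hn0 : (0:ℝ) < n := by exact_mod_cast hn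
  have h0 : S ≠ 0 := by
    rintro rfl
    have := (ENNReal.ofReal_eq_zero.1 (le_antisymm h bot_le))
    exact absurd (Real.exp_pos (-((n : ℝ) * K))) (not_lt.2 this)
  unfold elog
  rw [if_neg h0]
  rcases eq_or_ne S ⊤ with hST | hST
  · rw [if_pos hST, EReal.coe_mul_top_of_pos (by positivity)]
    simp
  · rw [if_neg hST, ← EReal.coe_mul, ← EReal.coe_neg, EReal.coe_le_coe_iff]
    have h1 : Real.exp (-((n : ℝ) * K)) ≤ S.toReal :=
      (ENNReal.ofReal_le_iff_le_toReal hST).1 h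
    have h2 : -((n : ℝ) * K) ≤ Real.log S.toReal := by
      rw [← Real.log_exp (-((n : ℝ) * K))]
      exact Real.log_le_log (Real.exp_pos _) h1
    have h3 := mul_le_mul_of_nonneg_left h2 (inv_nonneg.2 hn0.le)
    have h4 : (n : ℝ)⁻¹ * -((n : ℝ) * K) = -K := by field_simp
    linarith

lemma const_eq (n : ℕ) (c l α : ℝ) :
    ENNReal.ofReal (Real.exp (-c)) ^ n * (ENNReal.ofReal (Real.exp (-((n : ℝ) * α)))) ^ l =
      ENNReal.ofReal (Real.exp (-((n : ℝ) * (l * α + c)))) := by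
  rw [← ENNReal.ofReal_pow (Real.exp_pos _).le, ENNReal.ofReal_rpow_of_pos (Real.exp_pos _),
    ← ENNReal.ofReal_mul (by positivity), ← Real.exp_nat_mul, ← Real.exp_mul, ← Real.exp_add]
  congr 2
  ring

end Conv

/-! ### The reverse hypothesis from the variational quantities -/

section Rev

variable (P : Measure (X × Y)) [IsProbabilityMeasure P]

lemma Dmin_nonneg (QX : Measure X) (QY : Measure Y) : 0 ≤ Dmin QX QY P := by
  unfold Dmin
  refine le_iInf₂ fun Q hQ => ?_
  haveI := hQ.1
  exact KL_nonneg Q P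

lemma exists_coupling {QX : Measure X} {QY : Measure Y} {a : ℝ} (h : Dmin QX QY P < (a : EReal)) :
    ∃ Q : Measure (X × Y), IsProbabilityMeasure Q ∧ m1 Q = QX ∧ m2 Q = QY ∧
      ∃ d : ℝ, KL Q P = d ∧ d < a := by
  unfold Dmin at h
  simp only [iInf_lt_iff] at h
  obtain ⟨Q, hQ, hlt⟩ := h
  haveI := hQ.1
  have h0 := KL_nonneg Q P
  refine ⟨Q, hQ.1, hQ.2.1, hQ.2.2, (KL Q P).toReal, ?_, ?_⟩
  · exact (EReal.coe_toReal (hlt.trans (EReal.coe_lt_top a)).ne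
      (lt_of_lt_of_le EReal.bot_lt_zero h0).ne').symm
  · rw [← EReal.coe_lt_coe_iff, EReal.coe_toReal (hlt.trans (EReal.coe_lt_top a)).ne
      (lt_of_lt_of_le EReal.bot_lt_zero h0).ne']
    exact hlt

lemma revhyp_pos {r b l c m : ℝ} (hr : b = r⁻¹) (hm : 0 < m)
    (hF : ∀ s : ℝ, 0 ≤ s → phiSupR P r s ≤ ((l * s + c : ℝ) : EReal)) :
    RevHyp P l b c m := by
  intro QX s v ε hQX hac hs hs0 hv hv0 hv1 hε
  have hvp : ∀ y, 0 ≤ v y := fun y => hm.le.trans (hv0 y)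
  have hV : 0 < ∫ y, v y ∂(m2 P) := by
    have := integral_mono (μ := m2 P) (integrable_const m)
      (integrable_unit _ hv hvp hv1) hv0
    refine hm.trans_le ?_
    simpa using this
  obtain ⟨hprob, -, -, -, hKL⟩ := tilt_facts (m2 P) v hv hvp hv1 hV
  have hacY : tilt (m2 P) v ≪ m2 P := withDensity_absolutelyContinuous _ _
  set QY := tilt (m2 P) v with hQY
  set t := ∫ x, Real.log (v x) ∂QY - Real.log (∫ y, v y ∂(m2 P)) with ht
  have ht0 : 0 ≤ t := by
    have := KL_nonneg QY (m2 P)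
    rw [hKL] at this
    exact_mod_cast this
  have h1 : Dmin QX QY P ≤ phiU P s t := by
    unfold phiU
    refine le_trans ?_ (le_iSup₂ QX QY)
    refine le_trans ?_ (le_iSup₂ hQX hprob)
    refine le_trans ?_ (le_iSup₂ hac hacY)
    exact le_iSup₂ (f := fun _ _ => Dmin QX QY P) hs hKL
  have hdiv : divE t (r : EReal) = ((b * t : ℝ) : EReal) := by
    unfold divE
    rw [if_neg (by simp), EReal.toReal_coe, hr]
    congr 1
    rw [div_eq_mul_inv, mul_comm]
  have h2 : phiU P s t - ((b * t : ℝ) : EReal) ≤ ((l * s + c : ℝ) : EReal) := by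
    rw [← hdiv]
    refine le_trans ?_ (hF s hs0)
    unfold phiSupR
    exact le_iSup₂ (f := fun (t : ℝ) (_ : 0 ≤ t) => phiU P s t - divE t (r : EReal)) t ht0
  have h3 : Dmin QX QY P < ((l * s + c + b * t + ε : ℝ) : EReal) := by
    have h4 : Dmin QX QY P - ((b * t : ℝ) : EReal) ≤ ((l * s + c : ℝ) : EReal) :=
      (EReal.sub_le_sub h1 le_rfl).trans h2
    have h5 : Dmin QX QY P ≤ ((l * s + c : ℝ) : EReal) + ((b * t : ℝ) : EReal) :=
      (EReal.sub_le_iff_le_add (Or.inl (EReal.coe_ne_bot _)) (Or.inl (EReal.coe_ne_top _))).1 h4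
    refine h5.trans_lt ?_
    rw [← EReal.coe_add, EReal.coe_lt_coe_iff]
    linarith
  obtain ⟨Q, hQ, hQ1, hQ2, d, hd, hlt⟩ := exists_coupling P h3
  refine ⟨Q, hQ, hQ1, d, hd, ?_⟩
  rw [hQ2]
  have : b * t = b * ∫ x, Real.log (v x) ∂QY - b * Real.log (∫ y, v y ∂(m2 P)) := by
    rw [ht]; ring
  linarith

lemma revhyp_neg {r b l c m : ℝ} (hr0 : r < 0) (hr : b = r⁻¹) (hm : 0 < m)
    (hF : ∀ s : ℝ, 0 ≤ s → phiNeg P r s ≤ ((l * s + c : ℝ) : EReal)) :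
    RevHyp P l b c m := by
  intro QX s v ε hQX hac hs hs0 hv hv0 hv1 hε
  have hb : b < 0 := by rw [hr]; exact inv_lt_zero.2 hr0
  have hvp : ∀ y, 0 < v y := fun y => hm.trans_le (hv0 y)
  have h1 : (⨅ (QY : Measure Y) (_ : IsProbabilityMeasure QY) (_ : QY ≪ m2 P),
      Dmin QX QY P - ediv (KL QY (m2 P)) r) < ((l * s + c + ε : ℝ) : EReal) := by
    refine lt_of_le_of_lt (le_trans ?_ (hF s hs0)) (b := ((l * s + c : ℝ) : EReal))
      (by rw [EReal.coe_lt_coe_iff]; linarith)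
    unfold phiNeg
    refine le_trans ?_ (le_iSup₂ QX hQX)
    exact le_iSup₂ (f := fun (_ : QX ≪ m1 P) (_ : KL QX (m1 P) = (s : EReal)) =>
      ⨅ (QY : Measure Y) (_ : IsProbabilityMeasure QY) (_ : QY ≪ m2 P),
      Dmin QX QY P - ediv (KL QY (m2 P)) r) hac hs
  simp only [iInf_lt_iff] at h1
  obtain ⟨QY, hQY, hacY, hlt⟩ := h1
  unfold ediv at hlt
  rw [if_neg hr0.ne, ← hr] at hlt
  have hD0 := Dmin_nonneg P QX QY
  have hKT : KL QY (m2 P) ≠ ⊤ := by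
    intro hT
    rw [hT, EReal.top_mul_coe_of_neg hb, sub_eq_add_neg, EReal.neg_bot,
      EReal.add_top_of_ne_bot (lt_of_lt_of_le EReal.bot_lt_zero hD0).ne'] at hlt
    exact absurd hlt not_top_lt
  obtain ⟨-, hi, hKL⟩ := of_KL_ne_top hKT
  rw [hKL, ← EReal.coe_mul] at hlt
  set t := ∫ x, Real.log (QY.rnDeriv (m2 P) x).toReal ∂QY with ht
  have h3 : Dmin QX QY P < ((l * s + c + ε + t * b : ℝ) : EReal) := by
    rw [EReal.coe_add]
    exact (EReal.sub_lt_iff (Or.inl (EReal.coe_ne_bot _)) (Or.inl (EReal.coe_ne_top _))).1 hlt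
  obtain ⟨Q, hQ, hQ1, hQ2, d, hd, hdlt⟩ := exists_coupling P h3
  refine ⟨Q, hQ, hQ1, d, hd, ?_⟩
  rw [hQ2]
  have hdv := donsker_varadhan QY (m2 P) hacY hi v hv (fun y => (hvp y).le)
    (Eventually.of_forall hvp) (integrable_unit _ hv (fun y => (hvp y).le) hv1)
    (integrable_log_of_bdd QY hm hv hv0 hv1)
  rw [← ht] at hdv
  nlinarith [mul_le_mul_of_nonpos_left hdv hb.le]

lemma phiSupR_zero (r : ℝ) : phiSupR P r 0 ≠ ⊥ := by
  refine (lt_of_lt_of_le EReal.bot_lt_zero ?_).ne'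
  unfold phiSupR
  refine le_trans ?_ (le_iSup₂ (0:ℝ) le_rfl)
  have hd : divE 0 (r : EReal) = 0 := by
    unfold divE
    rw [if_neg (by simp)]
    simp
  rw [hd, sub_zero]
  unfold phiU
  refine le_trans ?_ (le_iSup₂ (m1 P) (m2 P))
  refine le_trans ?_ (le_iSup₂ (instm1 P) (instm2 P))
  refine le_trans ?_ (le_iSup₂ (Measure.AbsolutelyContinuous.refl _)
    (Measure.AbsolutelyContinuous.refl _))
  refine le_trans (Dmin_nonneg P (m1 P) (m2 P)) ?_
  exact le_iSup₂ (f := fun (_ : KL (m1 P) (m1 P) = ((0:ℝ) : EReal))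
    (_ : KL (m2 P) (m2 P) = ((0:ℝ) : EReal)) => Dmin (m1 P) (m2 P) P)
    (by rw [KL_self]; rfl) (by rw [KL_self]; rfl)

lemma phiNeg_zero {r : ℝ} (hr0 : r < 0) : phiNeg P r 0 ≠ ⊥ := by
  refine (lt_of_lt_of_le EReal.bot_lt_zero ?_).ne'
  unfold phiNeg
  refine le_trans ?_ (le_iSup₂ (m1 P) (instm1 P))
  refine le_trans ?_ (le_iSup₂ (Measure.AbsolutelyContinuous.refl _) (by rw [KL_self]; rfl))
  refine le_iInf fun QY => le_iInf fun hQY => le_iInf fun hac => ?_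
  unfold ediv
  rw [if_neg hr0.ne, sub_eq_add_neg]
  refine add_nonneg (Dmin_nonneg P _ _) ?_
  rw [EReal.neg_nonneg]
  refine EReal.mul_nonpos_iff.2 (Or.inl ⟨KL_nonneg _ _, ?_⟩)
  exact_mod_cast (inv_lt_zero.2 hr0).le

lemma part2 (κ : Kernel Y X) [IsMarkovKernel κ] (hκ : IsCondKernel P κ) {n : ℕ} (hn : 1 ≤ n)
    {α q : ℝ} (hα : 0 < α) (hq : q < 1) (hq0 : q ≠ 0) :
    qStabInf P κ n q α ≤ ThetaLT1 P (q / (q - 1)) α := by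
  refine EReal.le_of_forall_lt_iff_le.1 fun z hz => ?_
  obtain ⟨K, hK1, hK2⟩ := EReal.lt_iff_exists_real_btwn.1 hz
  have hK2' : K < z := by exact_mod_cast hK2
  have hq1 : q - 1 < 0 := by linarith
  have hb : (q - 1) / q = (q / (q - 1))⁻¹ := by rw [inv_div]
  have hF0 : phiLT1 P (q / (q - 1)) 0 ≠ ⊥ := by
    unfold phiLT1
    split_ifs with h
    · exact phiSupR_zero P _
    · exact phiNeg_zero P (lt_of_le_of_ne (not_lt.1 h) (div_ne_zero hq0 hq1.ne))
  obtain ⟨l, c, hl, hlc, hF⟩ := uce_support _ hα hF0 hK1.le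
  set δ := (z - K) / α with hδ
  have hδ0 : 0 < δ := div_pos (by linarith) hα
  have hδα : δ * α = z - K := by rw [hδ]; field_simp
  have hF' : ∀ s : ℝ, 0 ≤ s → phiLT1 P (q / (q - 1)) s ≤ (((l + δ) * s + c : ℝ) : EReal) := by
    intro s hs
    refine (hF s hs).trans ?_
    rw [EReal.coe_le_coe_iff]
    nlinarith
  have hH : ∀ m, 0 < m → RevHyp P (l + δ) ((q - 1) / q) c m := by
    intro m hm
    by_cases h : 0 < q / (q - 1)
    · refine revhyp_pos P hb hm fun s hs => ?_
      have := hF' s hs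
      rwa [phiLT1, if_pos h] at this
    · refine revhyp_neg P (lt_of_le_of_ne (not_lt.1 h) (div_ne_zero hq0 hq1.ne)) hb hm
        fun s hs => ?_
      have := hF' s hs
      rwa [phiLT1, if_neg h] at this
  unfold qStabInf
  refine inf_conv hn ?_
  refine le_iInf fun A => le_iInf fun hA => le_iInf fun hAα => ?_
  refine le_trans ?_ (rev_n P κ hκ n hq hq0 (by linarith) hH hA)
  have hz' : z = (l + δ) * α + c := by
    rw [add_mul, hδα]; linarith
  rw [hz', ← const_eq]
  exact mul_le_mul' le_rfl (ENNReal.rpow_le_rpow hAα (by linarith))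

lemma part3 (κ : Kernel Y X) [IsMarkovKernel κ] (hκ : IsCondKernel P κ) {n : ℕ} (hn : 1 ≤ n)
    {q : ℝ} : qStabInf P κ n q 0 ≤ 0 := by
  have hgoal : qStabInf P κ n q 0 ≤ ((0:ℝ) : EReal) := by
    unfold qStabInf
    refine inf_conv hn ?_
    refine le_iInf fun A => le_iInf fun hA => le_iInf fun hA1 => ?_
    simp only [mul_zero, neg_zero, Real.exp_zero, ENNReal.ofReal_one] at hA1 ⊢
    have h1 : ∫⁻ y, kpi κ y A ∂(piM n (m2 P)) = 1 := by
      rw [lintegral_kpi P κ hκ n hA]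
      exact le_antisymm prob_le_one hA1
    have h2 : (fun y => kpi κ y A) =ᵐ[piM n (m2 P)] fun _ => 1 := by
      refine ae_eq_of_ae_le_of_lintegral_le (Eventually.of_forall fun y => kpi_le_one κ y A) ?_
        aemeasurable_const ?_
      · rw [h1]; exact ENNReal.one_ne_top
      · rw [h1]; simp
    unfold enorm
    have h3 : ∫⁻ y, (kpi κ y A) ^ q ∂(piM n (m2 P)) = 1 := by
      rw [lintegral_congr_ae (g := fun _ => 1)]
      · simp
      · filter_upwards [h2] with y hy
        rw [hy]; simp
    rw [h3]; simp
  exact hgoal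

end Rev

/-! ### The forward inequality -/

section Fwd

variable (P : Measure (X × Y)) [IsProbabilityMeasure P]

lemma divE_conj {q : ℝ} (t : ℝ) :
    divE t (conj q) = (((q - 1) / q * t : ℝ) : EReal) := by
  unfold divE conj
  by_cases h : q = 1
  · simp [h]
  · rw [if_neg h, if_neg (by simp), EReal.toReal_coe]
    congr 1
    rw [div_div_eq_mul_div]
    ring

lemma integral_log_ind (Q : Measure X) (B : Set X) :
    ∫ x, Real.log (B.indicator (fun _ => (1:ℝ)) x) ∂Q = 0 := by
  have : ∀ x, Real.log (B.indicator (fun _ => (1:ℝ)) x) = 0 := by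
    intro x
    by_cases hx : x ∈ B <;> simp [hx]
  simp [this]

/-- One-dimensional bound for sets. -/
lemma one_dim_real {b m α K : ℝ} {r : EReal} (hb : 0 ≤ b) (hm : 0 < m) (hα0 : 0 ≤ α)
    (hr : ∀ t, divE t r = ((b * t : ℝ) : EReal)) (hK : (K : EReal) ≤ ThetaGe1 P r α)
    {B : Set X} (hB : MeasurableSet B) (hB0 : (m1 P).real B ≠ 0)
    (hBα : (m1 P).real B ≤ Real.exp (-α))
    {v : Y → ℝ} (hv : Measurable v) (hv0 : ∀ y, m ≤ v y) (hv1 : ∀ y, v y ≤ 1) :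
    ∫ z, (B.indicator (fun _ => (1:ℝ)) z.1) ^ (1:ℝ) * v z.2 ^ b ∂P ≤
      Real.exp (-K) * (∫ y, v y ∂(m2 P)) ^ b := by
  have hvp : ∀ y, 0 < v y := fun y => hm.trans_le (hv0 y)
  have hV : 0 < ∫ y, v y ∂(m2 P) := by
    have := integral_mono (μ := m2 P) (integrable_const m)
      (integrable_unit _ hv (fun y => (hvp y).le) hv1) hv0
    refine hm.trans_le ?_
    simpa using this
  rcases le_or_gt (∫ z, (B.indicator (fun _ => (1:ℝ)) z.1) ^ (1:ℝ) * v z.2 ^ b ∂P) 0 with hZ | hZ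
  · exact hZ.trans (by positivity)
  obtain ⟨Q, hQ, h1, h2, d, s, t, eu, ev, hd, hs, ht, hs0, ht0, heu0, heu, hev, hde⟩ :=
    core_fwd P hb zero_le_one hm (u := B.indicator (fun _ => (1:ℝ)))
      (measurable_const.indicator hB) hv
      (fun x => by by_cases hx : x ∈ B <;> simp [hx])
      (fun x => by by_cases hx : x ∈ B <;> simp [hx]) hv0 hv1 (Or.inl one_pos) hZ
  rw [integral_log_ind] at heu0
  rw [heu0, integral_indicator_const _ hB, smul_eq_mul, mul_one] at heu
  have hlog : Real.log ((m1 P).real B) ≤ -α := by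
    rw [← Real.log_exp (-α)]
    exact Real.log_le_log (lt_of_le_of_ne measureReal_nonneg hB0.symm) hBα
  have hsα : α ≤ s := by linarith
  have hk : (K : EReal) ≤ ((d - b * t : ℝ) : EReal) := by
    refine hK.trans ?_
    unfold ThetaGe1
    refine (iInf₂_le s hsα).trans ?_
    exact lce1_le _ hs0 (phiRinf_le P Q h1 h2 hd hs ht ht0 (hr t))
  have hk' : K ≤ d - b * t := by exact_mod_cast hk
  rw [← Real.log_le_log_iff hZ (by positivity), Real.log_mul (by positivity) (by positivity),
    Real.log_exp, Real.log_rpow hV]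
  rw [heu0] at hde
  nlinarith [mul_le_mul_of_nonneg_left hev hb]

lemma exists_finite {b α : ℝ} {r : EReal} (hb : 0 ≤ b)
    (hr : ∀ t, divE t r = ((b * t : ℝ) : EReal))
    {B : Set X} (hB : MeasurableSet B) (hB0 : (m1 P).real B ≠ 0)
    (hBα : α < -Real.log ((m1 P).real B)) :
    ∃ s1, α < s1 ∧ phiRinf P r s1 ≠ ⊤ := by
  have hZ : 0 < ∫ z, (B.indicator (fun _ => (1:ℝ)) z.1) ^ (1:ℝ) *
      ((fun _ : Y => (1:ℝ)) z.2) ^ b ∂P := by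
    have : ∀ z : X × Y, (B.indicator (fun _ => (1:ℝ)) z.1) ^ (1:ℝ) *
      ((fun _ : Y => (1:ℝ)) z.2) ^ b = (Prod.fst ⁻¹' B).indicator (fun _ => (1:ℝ)) z := by
      intro z
      simp [Set.indicator]
    simp only [this]
    rw [integral_indicator_const _ (measurable_fst hB), smul_eq_mul, mul_one]
    have e : P.real (Prod.fst ⁻¹' B) = (m1 P).real B := by
      unfold m1 Measure.real
      rw [Measure.map_apply measurable_fst hB]
    rw [e]
    exact lt_of_le_of_ne measureReal_nonneg hB0.symm
  obtain ⟨Q, hQ, h1, h2, d, s, t, eu, ev, hd, hs, ht, hs0, ht0, heu0, heu, hev, hde⟩ :=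
    core_fwd P hb zero_le_one one_pos (u := B.indicator (fun _ => (1:ℝ)))
      (measurable_const.indicator hB) (measurable_const (a := (1:ℝ)))
      (fun x => by by_cases hx : x ∈ B <;> simp [hx])
      (fun x => by by_cases hx : x ∈ B <;> simp [hx]) (fun _ => le_rfl) (fun _ => le_rfl)
      (Or.inl one_pos) hZ
  rw [integral_log_ind] at heu0
  rw [heu0, integral_indicator_const _ hB, smul_eq_mul, mul_one] at heu
  refine ⟨s, by linarith, ?_⟩
  exact ((phiRinf_le P Q h1 h2 hd hs ht ht0 (hr t)).trans_lt (EReal.coe_lt_top _)).ne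

variable (κ : Kernel Y X) [IsMarkovKernel κ]

lemma lintegral_cond_one (hκ : IsCondKernel P κ) {B : Set X} (hB : MeasurableSet B)
    (g : Y → ℝ≥0∞) (hg : Measurable g) :
    ∫⁻ z, B.indicator 1 z.1 * g z.2 ∂P = ∫⁻ y, κ y B * g y ∂(m2 P) := by
  have hP : P = ((m2 P) ⊗ₘ κ).map Prod.swap := by
    ext s hs
    rw [P_apply P κ hκ hs, Measure.map_apply measurable_swap hs,
      Measure.compProd_apply (measurable_swap hs)]
    rfl
  have hm : Measurable fun z : X × Y => B.indicator (1 : X → ℝ≥0∞) z.1 * g z.2 :=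
    ((measurable_one.indicator hB).comp measurable_fst).mul (hg.comp measurable_snd)
  conv_lhs => rw [hP]
  rw [lintegral_map hm measurable_swap, Measure.lintegral_compProd
    (f := fun a : Y × X => B.indicator (1 : X → ℝ≥0∞) a.swap.1 * g a.swap.2)
    (hm.comp measurable_swap)]
  refine lintegral_congr fun y => ?_
  simp only [Prod.fst_swap, Prod.snd_swap]
  rw [lintegral_mul_const _ (measurable_one.indicator hB), lintegral_indicator_one hB]

lemma one_dim (hκ : IsCondKernel P κ) {q α K : ℝ} (hq : 1 ≤ q) (hα0 : 0 ≤ α)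
    (hK : (K : EReal) ≤ ThetaGe1 P (conj q) α)
    {B : Set X} (hB : MeasurableSet B) (hB0 : (m1 P).real B ≠ 0)
    (hBα : (m1 P).real B ≤ Real.exp (-α)) :
    (∫⁻ y, (κ y B) ^ q ∂(m2 P)) ^ (1 / q) ≤ ENNReal.ofReal (Real.exp (-K)) := by
  have hq0 : 0 < q := by linarith
  have hb : 0 ≤ (q - 1) / q := div_nonneg (by linarith) hq0.le
  have hf : Measurable fun y => κ y B := κ.measurable_coe hB
  refine fwd_final (m2 P) hf (fun y => prob_le_one) hq ENNReal.ofReal_ne_top fun k => ?_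
  set e := ENNReal.ofReal (epsk k) with he
  have he1 : e ≤ 1 := ENNReal.ofReal_le_one.2 (epsk_le k)
  have hg1 : ∀ y : Y, max (κ y B) e ≤ 1 := fun y => max_le prob_le_one he1
  have hgm : Measurable fun y : Y => max (κ y B) e := hf.max measurable_const
  have hm : 0 < epsk k ^ q := Real.rpow_pos_of_pos (epsk_pos k) q
  have hv0 : ∀ y, ENNReal.ofReal (epsk k ^ q) ≤ (max (κ y B) e) ^ q := fun y => by
    rw [← ENNReal.ofReal_rpow_of_pos (epsk_pos k)]
    exact ENNReal.rpow_le_rpow (le_max_right _ _) hq0.le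
  have hv1 : ∀ y, (max (κ y B) e) ^ q ≤ 1 := fun y => ENNReal.rpow_le_one (hg1 y) hq0.le
  have hvm : Measurable fun y => (max (κ y B) e) ^ q := hgm.pow_const _
  have hvr : ∀ y, epsk k ^ q ≤ ((max (κ y B) e) ^ q).toReal := fun y => by
    rw [← ENNReal.ofReal_le_iff_le_toReal (ne_top_of_le_ne_top ENNReal.one_ne_top (hv1 y))]
    exact hv0 y
  have hvr1 : ∀ y, ((max (κ y B) e) ^ q).toReal ≤ 1 := fun y =>
    ENNReal.toReal_le_of_le_ofReal zero_le_one (by simpa using hv1 y)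
  have h := one_dim_real P hb hm hα0 (fun t => divE_conj t) hK hB hB0 hBα
    hvm.ennreal_toReal hvr hvr1
  have h1 := lintegral_prod_toReal P (l := 1) (b := (q - 1) / q) zero_le_one hm
    (u := B.indicator 1) (measurable_one.indicator hB) hvm
    (fun x => by by_cases hx : x ∈ B <;> simp [hx]) hv0 hv1
  have e1 : ∀ x, (B.indicator (1 : X → ℝ≥0∞) x).toReal = B.indicator (fun _ => (1:ℝ)) x := by
    intro x
    by_cases hx : x ∈ B <;> simp [hx]
  simp only [e1] at h1
  rw [← lintegral_cond_one P κ hκ hB (fun y => (max (κ y B) e) ^ (q - 1)) (hgm.pow_const _)]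
  have h2 : ∫⁻ z, B.indicator 1 z.1 * (max (κ z.2 B) e) ^ (q - 1) ∂P =
      ∫⁻ z, (B.indicator (1 : X → ℝ≥0∞) z.1) ^ (1:ℝ) *
        ((max (κ z.2 B) e) ^ q) ^ ((q - 1) / q) ∂P := by
    refine lintegral_congr fun z => ?_
    rw [ENNReal.rpow_one, ← ENNReal.rpow_mul, show q * ((q - 1) / q) = q - 1 by field_simp]
  rw [h2, h1, lintegral_toReal _ hvm hv1,
    ENNReal.ofReal_rpow_of_nonneg (integral_nonneg fun _ => ENNReal.toReal_nonneg) hb,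
    ← ENNReal.ofReal_mul (by positivity)]
  exact ENNReal.ofReal_le_ofReal h

lemma kpi_ae_zero (hκ : IsCondKernel P κ) (n : ℕ) {A : Set (Fin n → X)} (hA : MeasurableSet A)
    (h0 : piM n (m1 P) A = 0) : ∀ᵐ y ∂(piM n (m2 P)), kpi κ y A = 0 := by
  have h := lintegral_kpi P κ hκ n hA
  rw [h0, lintegral_eq_zero_iff (measurable_kpi_apply κ hA)] at h
  exact h

lemma ae_atom [TopologicalSpace X] [PolishSpace X] [BorelSpace X] (μ : Measure X)
    [IsProbabilityMeasure μ] {p : ℝ≥0∞}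
    (h : ∀ B, MeasurableSet B → μ B ≠ 0 → p ≤ μ B) : ∀ᵐ x ∂μ, p ≤ μ {x} := by
  rw [ae_iff]
  refine measure_null_of_locally_null _ fun x hx => ?_
  simp only [mem_setOf_eq, not_le] at hx
  letI := TopologicalSpace.upgradeIsCompletelyMetrizable X
  obtain ⟨U, hU, hUo, hUp⟩ := Set.exists_isOpen_lt_of_lt {x} p hx
  refine ⟨U, mem_nhdsWithin_of_mem_nhds (hUo.mem_nhds (hU rfl)), ?_⟩
  by_contra hne
  exact absurd (h U hUo.measurableSet hne) (not_le.2 hUp)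

lemma extreme_case [TopologicalSpace X] [PolishSpace X] [BorelSpace X]
    (hκ : IsCondKernel P κ) (n : ℕ) {q α K : ℝ} (hq : 1 ≤ q) (hα0 : 0 ≤ α)
    (hK : (K : EReal) ≤ ThetaGe1 P (conj q) α)
    (hmin : ∀ B, MeasurableSet B → m1 P B ≠ 0 → ENNReal.ofReal (Real.exp (-α)) ≤ m1 P B)
    {A : Set (Fin n → X)} (hA : MeasurableSet A)
    (hAα : piM n (m1 P) A ≤ ENNReal.ofReal (Real.exp (-((n : ℝ) * α)))) :
    enorm (piM n (m2 P)) (fun y => kpi κ y A) q ≤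
      ENNReal.ofReal (Real.exp (-((n : ℝ) * K))) := by
  have hq0 : 0 < q := by linarith
  unfold enorm
  rcases eq_or_ne (piM n (m1 P) A) 0 with h0 | h0
  · have h1 : ∫⁻ y, (kpi κ y A) ^ q ∂(piM n (m2 P)) = 0 := by
      rw [lintegral_congr_ae (g := fun _ => 0)]
      · simp
      · filter_upwards [kpi_ae_zero P κ hκ n hA h0] with y hy
        rw [hy, ENNReal.zero_rpow_of_pos hq0]
    rw [h1, ENNReal.zero_rpow_of_pos (by positivity)]
    exact bot_le
  -- an atom in `A`
  have hat : ∀ᵐ z ∂(piM n (m1 P)), ∀ i, ENNReal.ofReal (Real.exp (-α)) ≤ m1 P {z i} := by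
    rw [ae_all_iff]
    intro i
    unfold piM
    exact (Measure.tendsto_eval_ae_ae (μ := fun _ : Fin n => m1 P) (i := i)).eventually
      (ae_atom (m1 P) hmin)
  obtain ⟨z, hzA, hz⟩ : ∃ z ∈ A, ∀ i, ENNReal.ofReal (Real.exp (-α)) ≤ m1 P {z i} := by
    by_contra hcon
    push Not at hcon
    refine h0 (measure_mono_null (fun z hz => ?_) (ae_iff.1 hat))
    obtain ⟨i, hi⟩ := hcon z hz
    simp only [mem_setOf_eq, not_forall, not_le]
    exact ⟨i, hi⟩
  have hpz : piM n (m1 P) {z} = ∏ i, m1 P {z i} := by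
    unfold piM
    exact Measure.pi_singleton _ z
  have hpow : ENNReal.ofReal (Real.exp (-((n : ℝ) * α))) =
      ∏ _i : Fin n, ENNReal.ofReal (Real.exp (-α)) := by
    rw [Finset.prod_const, Finset.card_univ, Fintype.card_fin,
      ← ENNReal.ofReal_pow (Real.exp_pos _).le, ← Real.exp_nat_mul]
    congr 2
    ring
  have hzle : piM n (m1 P) {z} ≤ piM n (m1 P) A := measure_mono (by simpa using hzA)
  have hAz : piM n (m1 P) A ≤ piM n (m1 P) {z} := by
    rw [hpz]
    refine hAα.trans ?_
    rw [hpow]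
    exact Finset.prod_le_prod' fun i _ => hz i
  have hnull : piM n (m1 P) (A \ {z}) = 0 := by
    rw [measure_diff (by simpa using hzA) (measurableSet_singleton z).nullMeasurableSet
      (measure_ne_top _ _)]
    exact tsub_eq_zero_of_le hAz
  have hzi : ∀ i, (m1 P).real {z i} ≤ Real.exp (-α) := by
    by_contra hcon
    push Not at hcon
    obtain ⟨i, hi⟩ := hcon
    have hzr : ∀ i, Real.exp (-α) ≤ (m1 P).real {z i} := fun i =>
      (ENNReal.ofReal_le_iff_le_toReal (measure_ne_top _ _)).1 (hz i)
    have hlt : ∏ _i : Fin n, Real.exp (-α) < ∏ i, (m1 P).real {z i} :=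
      Finset.prod_lt_prod (fun _ _ => Real.exp_pos _) (fun j _ => hzr j) ⟨i, Finset.mem_univ i, hi⟩
    have hle : ∏ i, m1 P {z i} ≤ ∏ _i : Fin n, ENNReal.ofReal (Real.exp (-α)) := by
      rw [← hpz, ← hpow]
      exact hzle.trans hAα
    have hle' := ENNReal.toReal_mono (ENNReal.prod_ne_top fun _ _ => ENNReal.ofReal_ne_top) hle
    rw [ENNReal.toReal_prod, ENNReal.toReal_prod] at hle'
    simp only [ENNReal.toReal_ofReal (Real.exp_pos (-α)).le] at hle'
    exact absurd hle' (not_le.2 hlt)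
  have hae : ∀ᵐ y ∂(piM n (m2 P)), (kpi κ y A) ^ q = ∏ i, (κ (y i) {z i}) ^ q := by
    filter_upwards [kpi_ae_zero P κ hκ n (hA.diff (measurableSet_singleton z)) hnull] with y hy
    have e1 : kpi κ y A = kpi κ y {z} := by
      refine le_antisymm ?_ (measure_mono (by simpa using hzA))
      calc kpi κ y A ≤ kpi κ y (A \ {z} ∪ {z}) := measure_mono (by
            intro w hw
            by_cases h : w = z
            · exact Or.inr h
            · exact Or.inl ⟨hw, h⟩)
        _ ≤ kpi κ y (A \ {z}) + kpi κ y {z} := measure_union_le _ _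
        _ = kpi κ y {z} := by rw [hy, zero_add]
    have e2 : kpi κ y {z} = ∏ i, κ (y i) {z i} := by
      unfold kpi
      exact Measure.pi_singleton _ z
    rw [e1, e2, ENNReal.prod_rpow_of_nonneg hq0.le]
  rw [lintegral_congr_ae hae, lintegral_piM_prod (m2 P) n (fun i y => (κ y {z i}) ^ q)
    (fun i => (κ.measurable_coe (measurableSet_singleton _)).pow_const _),
    ← ENNReal.prod_rpow_of_nonneg (by positivity)]
  have hpowK : ENNReal.ofReal (Real.exp (-((n : ℝ) * K))) =
      ∏ _i : Fin n, ENNReal.ofReal (Real.exp (-K)) := by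
    rw [Finset.prod_const, Finset.card_univ, Fintype.card_fin,
      ← ENNReal.ofReal_pow (Real.exp_pos _).le, ← Real.exp_nat_mul]
    congr 2
    ring
  rw [hpowK]
  refine Finset.prod_le_prod' fun i _ => ?_
  refine one_dim P κ hκ hq hα0 hK (measurableSet_singleton _) ?_ (hzi i)
  have hzr : Real.exp (-α) ≤ (m1 P).real {z i} :=
      (ENNReal.ofReal_le_iff_le_toReal (measure_ne_top _ _)).1 (hz i)
  exact ((Real.exp_pos _).trans_le hzr).ne'

lemma part1 [TopologicalSpace X] [PolishSpace X] [BorelSpace X]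
    (hκ : IsCondKernel P κ) {n : ℕ} (hn : 1 ≤ n) {q α : ℝ} (hq : 1 ≤ q) (hα0 : 0 ≤ α) :
    ThetaGe1 P (conj q) α ≤ qStabSup P κ n q α := by
  have hq0 : 0 < q := by linarith
  have hb : 0 ≤ (q - 1) / q := div_nonneg (by linarith) hq0.le
  refine EReal.ge_of_forall_gt_iff_ge.1 fun K hK => ?_
  unfold qStabSup
  refine sup_conv hn ?_
  refine iSup_le fun A => iSup_le fun hA => iSup_le fun hAα => ?_
  by_cases hex : ∃ B, MeasurableSet B ∧ m1 P B ≠ 0 ∧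
      m1 P B < ENNReal.ofReal (Real.exp (-α))
  · obtain ⟨B, hB, hB0, hBα⟩ := hex
    have hBr : (m1 P).real B ≠ 0 := (ENNReal.toReal_pos hB0 (measure_ne_top _ _)).ne'
    have hBp : 0 < (m1 P).real B := ENNReal.toReal_pos hB0 (measure_ne_top _ _)
    have hBlt : (m1 P).real B < Real.exp (-α) :=
      (ENNReal.lt_ofReal_iff_toReal_lt (measure_ne_top _ _)).1 hBα
    have hlog : Real.log ((m1 P).real B) < -α := by
      rw [← Real.log_exp (-α)]
      exact Real.log_lt_log hBp hBlt
    obtain ⟨s1, hs1, hF1⟩ := exists_finite P hb (fun t => divE_conj (q := q) t) hB hBr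
      (α := α) (by linarith)
    obtain ⟨l, c, hl, hlc, hF⟩ := lce_support _ hα0 hs1 hF1 hK.le
    refine (fwd_n P κ hκ n hq hl (fun t => divE_conj t) hF hA).trans ?_
    rw [← hlc, ← const_eq]
    exact mul_le_mul' le_rfl (ENNReal.rpow_le_rpow hAα hl)
  · push Not at hex
    exact extreme_case P κ hκ n hq hα0 hK.le hex hA hAα

end Fwd

/-- Strong q-stability theorem, inequalities;
Theorem `thm:strongqstability`. -/
theorem statement12 [TopologicalSpace X] [PolishSpace X] [BorelSpace X]
    [TopologicalSpace Y] [PolishSpace Y] [BorelSpace Y]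
    (P : Measure (X × Y)) [IsProbabilityMeasure P]
    (hndX : ∀ x : X, m1 P ≠ Measure.dirac x) (hndY : ∀ y : Y, m2 P ≠ Measure.dirac y)
    (κ : Kernel Y X) [IsMarkovKernel κ] (hκ : IsCondKernel P κ)
    (n : ℕ) (hn : 1 ≤ n)
    (α : ℝ) (hα0 : 0 ≤ α) (hαmax : (α : EReal) ≤ alphaMax (m1 P)) :
    (∀ q : ℝ, 1 ≤ q → ThetaGe1 P (conj q) α ≤ qStabSup P κ n q α) ∧
    (∀ q : ℝ, q < 1 → q ≠ 0 →
      (0 < α → qStabInf P κ n q α ≤ ThetaLT1 P (q / (q - 1)) α) ∧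
      qStabInf P κ n q 0 ≤ (0 : EReal)) := by
  exact ⟨fun q hq => part1 P κ hκ hn hq hα0,
    fun q hq hq0 => ⟨fun hα => part2 P κ hκ hn hα hq hq0, part3 P κ hκ hn⟩⟩

end BL
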